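/- arXiv:math/9403211 — 10 statements merged into one kernel-verified Lean document; each statement's English description precedes it below -/
import Mathlib

section
/- Let $(T_r)_{r\in\mathbb{N}}$ be a sequence where each $T_r$ is a set of strictly increasing $r$-tuples of positive integers. Suppose that for every infinite subset $M \subseteq \mathbb{N}$ there exists a strictly increasing sequence $i_1 < i_2 < \cdots$ of elements of $M$ such that $(i_1,\ldots,i_r) \in T_r$ for every $r$. Then there exists an infinite subset $M_0 \subseteq \mathbb{N}$ such that for every $r$ and every choice of $i_1 < \cdots < i_r$ in $M_0$ one has $(i_1,\ldots,i_r) \in T_r$. -/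
/-!
Call a finite set *bad* if its increasing enumeration is not in the corresponding `T r`. Galvin's
lemma says that every family `F` of finite sets admits an infinite `N ⊆ ℕ` such that either no
finite subset of `N` is in `F`, or every infinite subset of `N` has an initial segment in `F`. For
the bad sets, the hypothesis on `T` excludes the second alternative.

Galvin's lemma is proved by Nash-Williams' combinatorial forcing: `M` accepts a finite set `s` if
every extension of `s` by an infinite subset of `M` has an initial segment in `F`, and rejects `s`
if no infinite subset of `M` accepts it. Diagonalising twice, one first makes `M` decide all of its
finite subsets, and then, if `M` rejects `∅`, thins it out so that rejection passes from `s` to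
`insert n s`. Every set in `F` is accepted, so the thinned-out set has no finite subset in `F`.
-/

namespace NashWilliams

section InitialSegment

/-- `t` is an initial segment of `X` for the order induced on `X`. -/
def IsInitialSegment {α : Type*} [LE α] (t X : Set α) : Prop :=
  t ⊆ X ∧ ∀ x ∈ X, ∀ y ∈ t, x ≤ y → x ∈ t

theorem isInitialSegment_union_left {α : Type*} [Preorder α] {s A : Set α}
    (h : ∀ a ∈ A, ∀ m ∈ s, m < a) : IsInitialSegment s (s ∪ A) := by
  refine ⟨Set.subset_union_left, ?_⟩
  rintro x (hx | hx) y hy hxy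
  · exact hx
  · exact absurd hxy (h x hx y hy).not_ge

theorem IsInitialSegment.eq_comp_of_strictMono {α β γ : Type*} [Preorder α] [LinearOrder β]
    [LinearOrder γ] [WellFoundedLT γ] {f : β → α} {g : γ → α} (hf : StrictMono f)
    (hg : StrictMono g) (h : IsInitialSegment (Set.range f) (Set.range g)) (e : β ≤i γ) :
    f = g ∘ e := by
  choose k hk using fun b => h.1 (Set.mem_range_self b)
  have hk_mono : StrictMono k := fun a b hab => by
    rw [← hg.lt_iff_lt, hk, hk]
    exact hf hab
  let k' : β ≤i γ :=
    { toRelEmbedding := (OrderEmbedding.ofStrictMono k hk_mono).ltEmbedding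
      mem_range_of_rel' := fun b c hcb => by
        obtain ⟨a, ha⟩ := h.2 (g c) ⟨c, rfl⟩ (f b) ⟨b, rfl⟩
          ((hg.monotone (le_of_lt hcb)).trans_eq (hk b))
        exact ⟨a, hg.injective ((hk a).trans ha)⟩ }
  funext b
  rw [Function.comp_apply, ← InitialSeg.eq k' e b]
  exact (hk b).symm

theorem IsInitialSegment.eq_comp_val {α : Type*} [Preorder α] {r : ℕ} {f : Fin r → α}
    {g : ℕ → α} (hf : StrictMono f) (hg : StrictMono g)
    (h : IsInitialSegment (Set.range f) (Set.range g)) : f = g ∘ Fin.val :=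
  h.eq_comp_of_strictMono hf hg
    { toRelEmbedding := (Fin.valOrderEmb r).ltEmbedding
      mem_range_of_rel' := fun a b hba => ⟨⟨b, hba.trans a.2⟩, rfl⟩ }

end InitialSegment

section Tail

/-- The part of `N` strictly above the finite set `s`, written `N / s` in Ramsey theory. -/
def tail (N : Set ℕ) (s : Finset ℕ) : Set ℕ :=
  {n ∈ N | ∀ m ∈ s, m < n}

theorem tail_subset (N : Set ℕ) (s : Finset ℕ) : tail N s ⊆ N :=
  Set.sep_subset _ _

theorem tail_mono {M N : Set ℕ} (h : M ⊆ N) (s : Finset ℕ) : tail M s ⊆ tail N s :=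
  fun _ hn => ⟨h hn.1, hn.2⟩

theorem tail_tail (N : Set ℕ) (s : Finset ℕ) : tail (tail N s) s = tail N s :=
  Set.Subset.antisymm (tail_subset _ _) fun _ hn => ⟨hn, hn.2⟩

theorem tail_infinite {N : Set ℕ} (hN : N.Infinite) (s : Finset ℕ) : (tail N s).Infinite :=
  (hN.sdiff (Set.finite_Iic (s.sup id))).mono fun _ hn =>
    ⟨hn.1, fun _ hm => (Finset.le_sup (f := id) hm).trans_lt (not_le.1 hn.2)⟩

theorem insert_union_tail_insert {X : Set ℕ} {s : Finset ℕ} {n : ℕ} (hn : IsLeast (tail X s) n) :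
    (↑(insert n s) ∪ tail X (insert n s) : Set ℕ) = ↑s ∪ tail X s := by
  ext x
  have h_mem : n ∈ tail X s := hn.1
  have h_le : x ∈ tail X s → n ≤ x := fun hx => hn.2 hx
  grind [tail]

end Tail

section Diagonalisation

theorem exists_infinite_subset_forall_mem_finset {α ι : Type*} {P : ι → Set α → Prop}
    (h_anti : ∀ s, Antitone (P s))
    (h_dense : ∀ s M, M.Infinite → ∃ N ⊆ M, N.Infinite ∧ P s N) (S : Finset ι)
    {M : Set α} (hM : M.Infinite) :
    ∃ N ⊆ M, N.Infinite ∧ ∀ s ∈ S, P s N := by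
  classical
  induction S using Finset.induction_on with
  | empty => exact ⟨M, subset_rfl, hM, by simp⟩
  | insert a S _ ih =>
    obtain ⟨N, hNM, hN, hNS⟩ := ih
    obtain ⟨K, hKN, hK, hKa⟩ := h_dense a N hN
    exact ⟨K, hKN.trans hNM, hK,
      (Finset.forall_mem_insert _ _ _).2 ⟨hKa, fun s hs => h_anti s hKN (hNS s hs)⟩⟩

theorem exists_antitone_infinite_forall {α : Type*} {Q : ℕ → Set α → Prop}
    (h_dense : ∀ k M, M.Infinite → ∃ N ⊆ M, N.Infinite ∧ Q k N)
    {M : Set α} (hM : M.Infinite) :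
    ∃ A : ℕ → Set α, Antitone A ∧ A 0 ⊆ M ∧ ∀ k, (A k).Infinite ∧ Q k (A k) := by
  choose f hf_sub hf_inf hfQ using h_dense
  let A : ℕ → {N : Set α // N.Infinite} := fun k =>
    Nat.rec ⟨f 0 M hM, hf_inf 0 M hM⟩ (fun k N => ⟨f (k + 1) N N.2, hf_inf (k + 1) N N.2⟩) k
  refine ⟨fun k => (A k).1, antitone_nat_of_succ_le fun k => hf_sub _ _ _, hf_sub _ _ _,
    fun k => ⟨(A k).2, ?_⟩⟩
  cases k <;> exact hfQ _ _ _

theorem exists_infinite_diagonal_intersection {A : ℕ → Set ℕ} (hA : Antitone A)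
    (hA_inf : ∀ k, (A k).Infinite) :
    ∃ N ⊆ A 0, N.Infinite ∧ ∀ m ∈ N, N ∩ Set.Ioi m ⊆ A (m + 1) := by
  choose g hgA hg_lt using fun k => (hA_inf k).exists_gt k
  let a : ℕ → ℕ := fun j => Nat.rec (g 0) (fun _ m => g (m + 1)) j
  have ha_succ (j : ℕ) : a (j + 1) ∈ A (a j + 1) := hgA _
  have ha_mono : StrictMono a :=
    strictMono_nat_of_lt_succ fun j => (Nat.lt_succ_self _).trans (hg_lt (a j + 1))
  refine ⟨Set.range a, ?_, Set.infinite_range_of_injective ha_mono.injective, ?_⟩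
  · rintro _ ⟨j, rfl⟩
    cases j with
    | zero => exact hgA 0
    | succ j => exact hA (Nat.zero_le _) (ha_succ j)
  · rintro _ ⟨i, rfl⟩ _ ⟨⟨j, rfl⟩, hij⟩
    obtain ⟨j, rfl⟩ := Nat.exists_eq_add_one.2 ((Nat.zero_le i).trans_lt (ha_mono.lt_iff_lt.1 hij))
    have hij' : i ≤ j := Nat.lt_succ_iff.1 (ha_mono.lt_iff_lt.1 hij)
    exact hA (Nat.succ_le_succ (ha_mono.monotone hij')) (ha_succ j)

theorem exists_infinite_subset_forall_tail {P : Finset ℕ → Set ℕ → Prop}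
    (h_anti : ∀ s, Antitone (P s))
    (h_dense : ∀ s M, M.Infinite → ∃ N ⊆ M, N.Infinite ∧ P s N)
    {M : Set ℕ} (hM : M.Infinite) :
    ∃ N ⊆ M, N.Infinite ∧ ∀ s : Finset ℕ, (s : Set ℕ) ⊆ N → P s (tail N s) := by
  obtain ⟨A, hA_anti, hAM, hA⟩ := exists_antitone_infinite_forall
    (Q := fun k N => ∀ s ∈ (Finset.range k).powerset, P s N)
    (fun k _ hK => exists_infinite_subset_forall_mem_finset h_anti h_dense _ hK) hM
  obtain ⟨N, hNA, hN, hN_diag⟩ :=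
    exists_infinite_diagonal_intersection hA_anti fun k => (hA k).1
  refine ⟨N, hNA.trans hAM, hN, fun s hs => ?_⟩
  rcases s.eq_empty_or_nonempty with rfl | hne
  · exact h_anti ∅ ((tail_subset N ∅).trans hNA) ((hA 0).2 ∅ (Finset.empty_mem_powerset _))
  · have h_range : s ⊆ Finset.range (s.max' hne + 1) := fun x hx =>
      Finset.mem_range.2 (Nat.lt_succ_of_le (s.le_max' x hx))
    have h_tail : tail N s ⊆ A (s.max' hne + 1) := fun n hn =>
      hN_diag _ (hs (s.max'_mem hne)) ⟨hn.1, hn.2 _ (s.max'_mem hne)⟩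
    exact h_anti s h_tail ((hA _).2 s (Finset.mem_powerset.2 h_range))

end Diagonalisation

section Forcing

variable {F : Set (Finset ℕ)} {s : Finset ℕ} {M : Set ℕ}

/-- `M` *accepts* `s` (relative to `F`): however `s` is extended by an infinite set of larger
elements of `M`, the resulting set has an initial segment in `F`. -/
def Accepts (F : Set (Finset ℕ)) (s : Finset ℕ) (M : Set ℕ) : Prop :=
  ∀ X ⊆ M, X.Infinite → ∃ t ∈ F, IsInitialSegment (t : Set ℕ) (↑s ∪ tail X s)

/-- `M` *rejects* `s` (relative to `F`): no infinite subset of `M` accepts `s`. -/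
def Rejects (F : Set (Finset ℕ)) (s : Finset ℕ) (M : Set ℕ) : Prop :=
  ∀ N ⊆ M, N.Infinite → ¬ Accepts F s N

theorem accepts_antitone (F : Set (Finset ℕ)) (s : Finset ℕ) : Antitone (Accepts F s) :=
  fun _ _ hNM h X hX => h X (hX.trans hNM)

theorem rejects_antitone (F : Set (Finset ℕ)) (s : Finset ℕ) : Antitone (Rejects F s) :=
  fun _ _ hNM h K hK => h K (hK.trans hNM)

theorem accepts_of_mem (hs : s ∈ F) (M : Set ℕ) : Accepts F s M :=
  fun _ _ _ => ⟨s, hs, isInitialSegment_union_left fun _ ha => ha.2⟩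

theorem Accepts.of_tail (h : Accepts F s (tail M s)) : Accepts F s M := fun X hXM hX => by
  simpa only [tail_tail] using h (tail X s) (tail_mono hXM s) (tail_infinite hX s)

theorem Rejects.of_tail (h : Rejects F s (tail M s)) : Rejects F s M := fun N hNM hN hacc =>
  h (tail N s) (tail_mono hNM s) (tail_infinite hN s) (accepts_antitone F s (tail_subset N s) hacc)

theorem accepts_of_forall_insert (h : ∀ n ∈ tail M s, Accepts F (insert n s) M) :
    Accepts F s M := fun X hXM hX => by
  have h_least : IsLeast (tail X s) (sInf (tail X s)) :=
    isLeast_csInf (tail_infinite hX s).nonempty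
  rw [← insert_union_tail_insert h_least]
  exact h _ (tail_mono hXM s h_least.1) X hXM hX

theorem Rejects.finite_accepts_insert (h : Rejects F s M) :
    {n ∈ tail M s | Accepts F (insert n s) M}.Finite := by
  by_contra h_inf
  have h_sub : {n ∈ tail M s | Accepts F (insert n s) M} ⊆ M :=
    (Set.sep_subset _ _).trans (tail_subset M s)
  exact h _ h_sub h_inf (accepts_of_forall_insert fun n hn =>
    accepts_antitone F _ h_sub hn.1.2)

theorem exists_infinite_subset_forall_accepts_or_rejects (F : Set (Finset ℕ))
    (hM : M.Infinite) :
    ∃ N ⊆ M, N.Infinite ∧ ∀ s : Finset ℕ, (s : Set ℕ) ⊆ N → Accepts F s N ∨ Rejects F s N := by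
  have h_dense (s : Finset ℕ) (M : Set ℕ) (hM : M.Infinite) :
      ∃ N ⊆ M, N.Infinite ∧ (Accepts F s N ∨ Rejects F s N) := by
    by_cases h : Rejects F s M
    · exact ⟨M, subset_rfl, hM, Or.inr h⟩
    · simp only [Rejects, not_forall, not_not] at h
      obtain ⟨N, hNM, hN, hacc⟩ := h
      exact ⟨N, hNM, hN, Or.inl hacc⟩
  obtain ⟨N, hNM, hN, h⟩ := exists_infinite_subset_forall_tail
    (fun s _ _ hNM => Or.imp (accepts_antitone F s hNM) (rejects_antitone F s hNM)) h_dense hM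
  exact ⟨N, hNM, hN, fun s hs => (h s hs).imp Accepts.of_tail Rejects.of_tail⟩

theorem Rejects.exists_infinite_subset_forall_rejects (h_empty : Rejects F ∅ M)
    (h_decide : ∀ s : Finset ℕ, (s : Set ℕ) ⊆ M → Accepts F s M ∨ Rejects F s M)
    (hM : M.Infinite) :
    ∃ N ⊆ M, N.Infinite ∧ ∀ s : Finset ℕ, (s : Set ℕ) ⊆ N → Rejects F s M := by
  let P (s : Finset ℕ) (N : Set ℕ) : Prop :=
    Rejects F s M → ∀ n ∈ N, n ∈ tail M s → ¬ Accepts F (insert n s) M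
  have h_anti (s : Finset ℕ) : Antitone (P s) := fun _ _ hKN h hs n hn => h hs n (hKN hn)
  have h_dense (s : Finset ℕ) (K : Set ℕ) (hK : K.Infinite) :
      ∃ N ⊆ K, N.Infinite ∧ P s N := by
    by_cases hs : Rejects F s M
    · exact ⟨_, Set.sdiff_subset, hK.sdiff hs.finite_accepts_insert,
        fun _ n hn hnM hacc => hn.2 ⟨hnM, hacc⟩⟩
    · exact ⟨K, subset_rfl, hK, fun h => absurd h hs⟩
  obtain ⟨N, hNM, hN, h_insert⟩ := exists_infinite_subset_forall_tail h_anti h_dense hM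
  refine ⟨N, hNM, hN, fun s => ?_⟩
  induction s using Finset.induction_on_max with
  | empty => exact fun _ => h_empty
  | insert n s hn ih =>
    intro hs
    obtain ⟨hnN, hsN⟩ : n ∈ N ∧ (s : Set ℕ) ⊆ N := by
      rwa [Finset.coe_insert, Set.insert_subset_iff] at hs
    exact (h_decide _ (hs.trans hNM)).resolve_left
      (h_insert s hsN (ih hsN) n ⟨hnN, hn⟩ ⟨hNM hnN, hn⟩)

theorem galvin_lemma (F : Set (Finset ℕ)) (hM : M.Infinite) :
    ∃ N ⊆ M, N.Infinite ∧
      ((∀ s : Finset ℕ, (s : Set ℕ) ⊆ N → s ∉ F) ∨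
        ∀ X ⊆ N, X.Infinite → ∃ t ∈ F, IsInitialSegment (t : Set ℕ) X) := by
  obtain ⟨K, hKM, hK, h_decide⟩ := exists_infinite_subset_forall_accepts_or_rejects F hM
  rcases h_decide ∅ (by simp) with h_acc | h_rej
  · refine ⟨K, hKM, hK, Or.inr fun X hXK hX => ?_⟩
    simpa [tail] using h_acc X hXK hX
  · obtain ⟨N, hNK, hN, h_rejects⟩ := h_rej.exists_infinite_subset_forall_rejects h_decide hK
    exact ⟨N, hNK.trans hKM, hN,
      Or.inl fun s hs hsF => h_rejects s hs K subset_rfl hK (accepts_of_mem hsF K)⟩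

end Forcing

end NashWilliams

/-- **An elementary Ramsey theorem.**
For each `r`, `T r` is a family of strictly increasing `r`-tuples of naturals.
If every infinite `M ⊆ ℕ` contains a strictly increasing sequence all of whose
initial segments lie in the corresponding `T r`, then there is an infinite
`M₀ ⊆ ℕ` such that *every* strictly increasing `r`-tuple from `M₀` lies in `T r`. -/
theorem ramsey_type_theorem (T : ∀ r : ℕ, Set (Fin r → ℕ))
    (h : ∀ M : Set ℕ, M.Infinite →
      ∃ i : ℕ → ℕ, StrictMono i ∧ (∀ n, i n ∈ M) ∧
        ∀ r : ℕ, (fun ρ : Fin r => i ρ) ∈ T r) :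
    ∃ M₀ : Set ℕ, M₀.Infinite ∧
      ∀ (r : ℕ) (i : Fin r → ℕ), StrictMono i → (∀ ρ, i ρ ∈ M₀) → i ∈ T r := by
  let bad : Set (Finset ℕ) :=
    {t | ∃ (r : ℕ) (j : Fin r → ℕ), StrictMono j ∧ Set.range j = t ∧ j ∉ T r}
  obtain ⟨N, -, hN, h_none | h_initial⟩ := NashWilliams.galvin_lemma bad Set.infinite_univ
  · refine ⟨N, hN, fun r j hj hjN => by_contra fun hjT => ?_⟩
    exact h_none (Finset.univ.image j) (by simpa [Set.range_subset_iff] using hjN)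
      ⟨r, j, hj, by simp, hjT⟩
  · obtain ⟨i, hi, hiN, hiT⟩ := h N hN
    obtain ⟨t, ⟨r, j, hj, hjt, hjT⟩, ht⟩ := h_initial (Set.range i)
      (Set.range_subset_iff.2 hiN) (Set.infinite_range_of_injective hi.injective)
    rw [← hjt] at ht
    exact absurd (ht.eq_comp_val hj hi ▸ hiT r) hjT
end

section
/- Let $(T_r)_{r\in\mathbb{N}}$ be a sequence where each $T_r$ is a set of strictly increasing $r$-tuples of positive integers, and suppose that for every infinite subset $M \subseteq \mathbb{N}$ there exists a strictly increasing sequence $i_1 < i_2 < \cdots$ of elements of $M$ with $(i_1,\ldots,i_r) \in T_r$ for every $r$. Then there exists an infinite subset $\widetilde{M_0} \subseteq \mathbb{N}$ such that for every $k \geq 0$ and every choice of $i_1 < \cdots < i_k$ in $\widetilde{M_0}$, either $i_1,\ldots,i_k \downarrow \widetilde{M_0}$ or $i_1,\ldots,i_k \uparrow \widetilde{M_0}$ holds. -/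
/-- The sequence obtained by extending the finite tuple `i : Fin k → ℕ` by the
infinite sequence `j : ℕ → ℕ`. -/
def extendTuple {k : ℕ} (i : Fin k → ℕ) (j : ℕ → ℕ) : ℕ → ℕ :=
  fun n => if h : n < k then i ⟨n, h⟩ else j (n - k)

/-- `i₁,…,i_k ↓ M` : whenever `i_{k+1} < i_{k+2} < ⋯` are points of `M` with
`i_{k+1} > i_k`, there is an `r` with `(i₁,…,i_r) ∉ T r`. -/
def ArrowDown (T : ∀ r : ℕ, Set (Fin r → ℕ)) {k : ℕ} (i : Fin k → ℕ) (M : Set ℕ) : Prop :=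
  ∀ j : ℕ → ℕ, StrictMono j → (∀ n, j n ∈ M) → (∀ ρ : Fin k, i ρ < j 0) →
    ∃ r : ℕ, (fun ρ : Fin r => extendTuple i j ρ) ∉ T r

/-- `i₁,…,i_k ↑ M` : whenever `N` is an infinite subset of `M`, there are
`i_{k+1} < i_{k+2} < ⋯` in `N` with `i_{k+1} > i_k` such that `(i₁,…,i_r) ∈ T r`
for every `r`. -/
def ArrowUp (T : ∀ r : ℕ, Set (Fin r → ℕ)) {k : ℕ} (i : Fin k → ℕ) (M : Set ℕ) : Prop :=
  ∀ N : Set ℕ, N ⊆ M → N.Infinite →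
    ∃ j : ℕ → ℕ, StrictMono j ∧ (∀ n, j n ∈ N) ∧ (∀ ρ : Fin k, i ρ < j 0) ∧
      ∀ r : ℕ, (fun ρ : Fin r => extendTuple i j ρ) ∈ T r

/-!
Every infinite `M` has an infinite subset deciding a given tuple: if `i ↑ M` fails, then a set `N`
witnessing the failure satisfies `i ↓ N`. Whether `M` decides `i` depends only on the points of `M`
beyond the entries of `i`, and every subset of a set deciding `i` decides `i`. Since only finitely
many increasing tuples have entries at most `n`, there are infinite sets `A 0 ⊇ A 1 ⊇ ⋯` such that
`A n` decides all of these. An infinite `M₀ ⊆ A 0`, each of whose points `x` is followed only by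
points of `A x`, then decides every increasing tuple of its own points.
-/

section Fusion

theorem exists_infinite_subset_forall_mem_finset {ι α : Type*} {P : ι → Set α → Prop}
    (anti : ∀ i, Antitone (P i))
    (exists_subset : ∀ i M, M.Infinite → ∃ N ⊆ M, N.Infinite ∧ P i N)
    (S : Finset ι) {M : Set α} (hM : M.Infinite) :
    ∃ N ⊆ M, N.Infinite ∧ ∀ i ∈ S, P i N := by
  classical
  induction S using Finset.induction_on with
  | empty => exact ⟨M, subset_rfl, hM, by simp⟩
  | insert a S _ ih =>
    obtain ⟨N, hNM, hN, hPN⟩ := ih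
    obtain ⟨N', hN'N, hN', hPN'⟩ := exists_subset a N hN
    exact ⟨N', hN'N.trans hNM, hN',
      (Finset.forall_mem_insert _ _ _).2 ⟨hPN', fun i hi => anti i hN'N (hPN i hi)⟩⟩

theorem exists_antitone_infinite_seq {α : Type*} [Infinite α] {Q : ℕ → Set α → Prop}
    (exists_subset : ∀ n M, M.Infinite → ∃ N ⊆ M, N.Infinite ∧ Q n N) :
    ∃ A : ℕ → Set α, Antitone A ∧ (∀ n, (A n).Infinite) ∧ ∀ n, Q n (A n) := by
  choose! F hF_sub hF_inf hFQ using exists_subset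
  let B : ℕ → Set α := fun n => n.rec Set.univ F
  have hB : ∀ n, (B n).Infinite := fun n => by
    induction n with
    | zero => exact Set.infinite_univ
    | succ n ih => exact hF_inf n _ ih
  exact ⟨fun n => B (n + 1), antitone_nat_of_succ_le fun n => hF_sub _ _ (hB (n + 1)),
    fun n => hB (n + 1), fun n => hFQ n _ (hB n)⟩

theorem exists_infinite_diagonal {A : ℕ → Set ℕ} (hA : Antitone A)
    (hA_inf : ∀ n, (A n).Infinite) :
    ∃ M ⊆ A 0, M.Infinite ∧ ∀ x ∈ M, ∀ y ∈ M, x < y → y ∈ A x := by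
  obtain ⟨m, hm_zero, hm⟩ := exists_seq_of_forall_finset_exists (· ∈ A 0)
    (fun x y => x < y ∧ y ∈ A x) fun s _ => by
      obtain ⟨y, hy, hsy⟩ := (hA_inf (s.sup id)).exists_gt (s.sup id)
      have hle : ∀ x ∈ s, x ≤ s.sup id := fun x hx => Finset.le_sup (f := id) hx
      exact ⟨y, hA (Nat.zero_le _) hy, fun x hx => ⟨(hle x hx).trans_lt hsy, hA (hle x hx) hy⟩⟩
  have hm_mono : StrictMono m := fun a b hab => (hm a b hab).1
  refine ⟨Set.range m, Set.range_subset_iff.2 hm_zero,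
    Set.infinite_range_of_injective hm_mono.injective, ?_⟩
  rintro _ ⟨a, rfl⟩ _ ⟨b, rfl⟩ hab
  exact (hm a b (hm_mono.lt_iff_lt.1 hab)).2

theorem exists_infinite_forall_finset_subset {P : Finset ℕ → Set ℕ → Prop}
    (mono : ∀ s A B, P s A → B ∩ {x | ∀ y ∈ s, y < x} ⊆ A → P s B)
    (exists_subset : ∀ s M, M.Infinite → ∃ N ⊆ M, N.Infinite ∧ P s N) :
    ∃ M : Set ℕ, M.Infinite ∧ ∀ s : Finset ℕ, ↑s ⊆ M → P s M := by
  have anti : ∀ s, Antitone (P s) := fun s B A hBA hP =>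
    mono s A B hP (Set.inter_subset_left.trans hBA)
  obtain ⟨A, hA, hA_inf, hPA⟩ := exists_antitone_infinite_seq fun n _ =>
    exists_infinite_subset_forall_mem_finset anti exists_subset (Finset.Iic n).powerset
  obtain ⟨M, hM_zero, hM, hMA⟩ := exists_infinite_diagonal hA hA_inf
  refine ⟨M, hM, fun s hs => mono s (A (s.sup id)) M (hPA _ s ?_) ?_⟩
  · exact Finset.mem_powerset.2 fun x hx => Finset.mem_Iic.2 (Finset.le_sup (f := id) hx)
  · rintro y ⟨hyM, hsy⟩
    rcases s.eq_empty_or_nonempty with rfl | hne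
    · exact hM_zero hyM
    · obtain ⟨x, hx, hsup⟩ := s.exists_mem_eq_sup hne id
      exact hsup ▸ hMA x (hs hx) y hyM (hsy x hx)

end Fusion

theorem exists_orderEmbOfFin_eq_of_strictMono {α : Type*} [LinearOrder α] {k : ℕ} {i : Fin k → α}
    (hi : StrictMono i) : ∃ (s : Finset α) (h : s.card = k), ⇑(s.orderEmbOfFin h) = i :=
  ⟨Finset.univ.map ⟨i, hi.injective⟩, by simp,
    (Finset.orderEmbOfFin_unique _ (by simp) hi).symm⟩

section Decided

variable {T : ∀ r : ℕ, Set (Fin r → ℕ)} {k : ℕ} {i : Fin k → ℕ} {A M : Set ℕ}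

theorem ArrowDown.mono (hA : ArrowDown T i A) (hMA : M ∩ {x | ∀ ρ, i ρ < x} ⊆ A) :
    ArrowDown T i M := fun j hj hjM hij =>
  hA j hj (fun n => hMA ⟨hjM n, fun ρ => (hij ρ).trans_le (hj.monotone n.zero_le)⟩) hij

theorem ArrowUp.mono (hA : ArrowUp T i A) (hMA : M ∩ {x | ∀ ρ, i ρ < x} ⊆ A) :
    ArrowUp T i M := by
  intro N hNM hN
  obtain ⟨b, hb⟩ := (Set.finite_range i).bddAbove
  have hN_sub : N \ Set.Iic b ⊆ A := fun x hx =>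
    hMA ⟨hNM hx.1, fun ρ => (hb ⟨ρ, rfl⟩).trans_lt (not_le.1 hx.2)⟩
  obtain ⟨j, hj, hjN, hij, hjT⟩ := hA _ hN_sub (hN.sdiff (Set.finite_Iic b))
  exact ⟨j, hj, fun n => (hjN n).1, hij, hjT⟩

theorem exists_arrowDown_of_not_arrowUp (h : ¬ ArrowUp T i M) :
    ∃ N ⊆ M, N.Infinite ∧ ArrowDown T i N := by
  simpa only [ArrowUp, ArrowDown, not_forall, not_exists, not_and, exists_prop] using h

variable (T i M) in
/-- The set `M` decides the tuple `i`: one of `i ↓ M` and `i ↑ M` holds. -/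
def Decided : Prop :=
  ArrowDown T i M ∨ ArrowUp T i M

theorem Decided.mono (hA : Decided T i A) (hMA : M ∩ {x | ∀ ρ, i ρ < x} ⊆ A) :
    Decided T i M :=
  hA.imp (·.mono hMA) (·.mono hMA)

variable (T i) in
theorem exists_infinite_subset_decided (hM : M.Infinite) :
    ∃ N ⊆ M, N.Infinite ∧ Decided T i N := by
  by_cases hup : ArrowUp T i M
  · exact ⟨M, subset_rfl, hM, .inr hup⟩
  · obtain ⟨N, hNM, hN, hdown⟩ := exists_arrowDown_of_not_arrowUp hup
    exact ⟨N, hNM, hN, .inl hdown⟩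

end Decided

theorem Decided.mono_orderEmbOfFin {T : ∀ r : ℕ, Set (Fin r → ℕ)} {s : Finset ℕ} {A M : Set ℕ}
    (hA : Decided T (s.orderEmbOfFin rfl) A) (hMA : M ∩ {x | ∀ y ∈ s, y < x} ⊆ A) :
    Decided T (s.orderEmbOfFin rfl) M := by
  refine hA.mono fun x ⟨hxM, hsx⟩ => hMA ⟨hxM, fun y hy => ?_⟩
  obtain ⟨ρ, rfl⟩ : y ∈ Set.range (s.orderEmbOfFin rfl) := by
    rwa [Finset.range_orderEmbOfFin]
  exact hsx ρ

theorem exists_down_or_up_general (T : ∀ r : ℕ, Set (Fin r → ℕ)) :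
    ∃ M₀ : Set ℕ, M₀.Infinite ∧
      ∀ (k : ℕ) (i : Fin k → ℕ), StrictMono i → (∀ ρ, i ρ ∈ M₀) →
        ArrowDown T i M₀ ∨ ArrowUp T i M₀ := by
  obtain ⟨M₀, hM₀, hdec⟩ := exists_infinite_forall_finset_subset
    (P := fun s M => Decided T (s.orderEmbOfFin rfl) M)
    (fun s _ _ => Decided.mono_orderEmbOfFin)
    (fun s _ => exists_infinite_subset_decided T (s.orderEmbOfFin rfl))
  refine ⟨M₀, hM₀, fun k i hi hiM => ?_⟩
  obtain ⟨s, rfl, rfl⟩ := exists_orderEmbOfFin_eq_of_strictMono hi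
  exact hdec s (by rwa [← s.range_orderEmbOfFin rfl, Set.range_subset_iff])

/-- There is an infinite set `M₀` such that each tuple from `M₀` satisfies
`↓ M₀` or `↑ M₀`. -/
theorem exists_down_or_up (T : ∀ r : ℕ, Set (Fin r → ℕ))
    (h : ∀ M : Set ℕ, M.Infinite →
      ∃ i : ℕ → ℕ, StrictMono i ∧ (∀ n, i n ∈ M) ∧
        ∀ r : ℕ, (fun ρ : Fin r => i ρ) ∈ T r) :
    ∃ M₀ : Set ℕ, M₀.Infinite ∧
      ∀ (k : ℕ) (i : Fin k → ℕ), StrictMono i → (∀ ρ, i ρ ∈ M₀) →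
        ArrowDown T i M₀ ∨ ArrowUp T i M₀ :=
  exists_down_or_up_general T
end

section
/- Let $(T_r)_{r\in\mathbb{N}}$ be a sequence where each $T_r$ is a set of strictly increasing $r$-tuples of positive integers, let $\widetilde{M_0} \subseteq \mathbb{N}$ be infinite, and let $i_1 < \cdots < i_k$ be elements of $\widetilde{M_0}$ with $i_1,\ldots,i_k \uparrow \widetilde{M_0}$. Then there are only finitely many $i > i_k$ in $\widetilde{M_0}$ such that $i_1,\ldots,i_k,i \downarrow \widetilde{M_0}$. -/
theorem extendTuple_snoc_tail {k : ℕ} (i : Fin k → ℕ) (j : ℕ → ℕ) :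
    extendTuple (Fin.snoc i (j 0)) (fun n => j (n + 1)) = extendTuple i j := by
  funext n
  rcases lt_trichotomy n k with hlt | rfl | hgt
  · simp [extendTuple, Fin.snoc, hlt, hlt.trans k.lt_succ_self]
  · simp [extendTuple, Fin.snoc]
  · have hsub : n - (k + 1) + 1 = n - k := by omega
    simp [extendTuple, hgt.not_gt, hgt.not_ge, hsub]

theorem not_arrowDown_snoc_of_forall_mem {T : ∀ r : ℕ, Set (Fin r → ℕ)} {M : Set ℕ} {k : ℕ}
    {i : Fin k → ℕ} {j : ℕ → ℕ} (hj : StrictMono j) (hjM : ∀ n, j (n + 1) ∈ M)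
    (hij : ∀ ρ, i ρ < j 0) (hT : ∀ r, (fun ρ : Fin r => extendTuple i j ρ) ∈ T r) :
    ¬ArrowDown T (Fin.snoc i (j 0)) M := by
  intro hdown
  have htail : StrictMono fun n => j (n + 1) := hj.comp fun _ _ h => Nat.succ_lt_succ h
  have h01 : j 0 < j 1 := hj Nat.zero_lt_one
  have hsnoc : ∀ ρ : Fin (k + 1), Fin.snoc (α := fun _ => ℕ) i (j 0) ρ < j 1 :=
    Fin.lastCases (by simpa using h01) fun ρ => by simpa using (hij ρ).trans h01
  obtain ⟨r, hr⟩ := hdown _ htail hjM hsnoc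
  rw [extendTuple_snoc_tail] at hr
  exact hr (hT r)

theorem finitely_many_down_extensions_general {T : ∀ r : ℕ, Set (Fin r → ℕ)} {M : Set ℕ}
    {k : ℕ} {i : Fin k → ℕ} (hup : ArrowUp T i M) :
    {m ∈ M | ArrowDown T (Fin.snoc i m) M}.Finite := by
  by_contra hinf
  -- The set of bad extensions itself serves as the infinite `N` in the definition of `↑`.
  obtain ⟨j, hj, hjbad, hij, hT⟩ := hup _ (Set.sep_subset _ _) hinf
  exact not_arrowDown_snoc_of_forall_mem hj (fun n => (hjbad (n + 1)).1) hij hT (hjbad 0).2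

/-- If `i₁,…,i_k ↑ M₀` then there are only finitely many `i > i_k` in `M₀` with
`i₁,…,i_k,i ↓ M₀`. -/
theorem finitely_many_down_extensions (T : ∀ r : ℕ, Set (Fin r → ℕ))
    (M : Set ℕ) (hM : M.Infinite) {k : ℕ} (i : Fin k → ℕ)
    (hi : StrictMono i) (hiM : ∀ ρ, i ρ ∈ M) (hup : ArrowUp T i M) :
    {m : ℕ | m ∈ M ∧ (∀ ρ, i ρ < m) ∧ ArrowDown T (Fin.snoc i m) M}.Finite :=
  (finitely_many_down_extensions_general hup).subset fun _ hm => ⟨hm.1, hm.2.2⟩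
end

section
/- Let $X$ be a real Banach space, let $(x_n)$ be a bounded sequence in $X$, and let $\varepsilon > 0$. Suppose $(x_n)$ admits $\varepsilon$-$\ell^1$-blocks. Then there is a subsequence $(x_{n_k})$ of $(x_n)$ such that for every $x' \in X'$ with $\|x'\| = 1$ one has $\limsup_k x'(x_{n_k}) - \liminf_k x'(x_{n_k}) \leq 2\varepsilon$. -/
open Filter

/-- A bounded sequence `(xₙ)` in a Banach space over `𝕜` admits
`ε`-`ℓ¹`-blocks if for every infinite `M ⊆ ℕ` there are `i₁ < ⋯ < i_r` in `M`
and scalars `a₁,…,a_r` with `∑ |a_ρ| = 1` and `‖∑ a_ρ x_{i_ρ}‖ ≤ ε`. -/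
def AdmitsL1Blocks (𝕜 : Type*) [RCLike 𝕜] {X : Type*} [NormedAddCommGroup X]
    [NormedSpace 𝕜 X] (x : ℕ → X) (ε : ℝ) : Prop :=
  ∀ M : Set ℕ, M.Infinite →
    ∃ (r : ℕ) (i : Fin r → ℕ) (a : Fin r → 𝕜),
      StrictMono i ∧ (∀ ρ, i ρ ∈ M) ∧ (∑ ρ, ‖a ρ‖) = 1 ∧
        ‖∑ ρ, a ρ • x (i ρ)‖ ≤ ε

/-!
Call a sequence of finite set systems `(A n i)ᵢ` convergent along `N ⊆ ℕ` if every point lies in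
only finitely many of the sets `A n i`, `n ∈ N`, for at least one `i`. If no subsequence converges,
a fusion argument selects indices one at a time so that, on each intersection of one set from every
system selected so far, still no subsequence of the remaining systems converges; in particular
these intersections are nonempty, so the selected systems are independent.

For the pairs of half spaces `{x' | x' (x n) < a}`, `{x' | b < x' (x n)}` in the dual unit ball,
independence lets two functionals match the signs of given coefficients in opposite ways, which
yields the lower `ℓ¹`-estimate `(b - a) ∑ |cₙ| ≤ 2 ‖∑ cₙ xₙ‖`. With `ε`-`ℓ¹`-blocks this is
impossible once `b - a > 2ε`, so a subsequence of the pairs converges, and diagonalizing over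
rational `a`, `b` makes one subsequence work for all of them.
-/

namespace QuantitativeRosenthal

section Selection

lemma exists_infinite_subset_forall_sdiff_finite {N : ℕ → Set ℕ} (hanti : Antitone N)
    (hinf : ∀ k, (N k).Infinite) :
    ∃ D ⊆ N 0, D.Infinite ∧ ∀ k, (D \ N k).Finite := by
  obtain ⟨φ, hφ, hφN⟩ := extraction_forall_of_frequently
    fun k => Nat.frequently_atTop_iff_infinite.2 (hinf k)
  refine ⟨Set.range φ, ?_, Set.infinite_range_of_injective hφ.injective, fun k => ?_⟩
  · rintro _ ⟨l, rfl⟩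
    exact hanti l.zero_le (hφN l)
  · refine ((Set.finite_Iio k).image φ).subset ?_
    rintro _ ⟨⟨l, rfl⟩, hl⟩
    exact ⟨l, not_le.1 fun hkl => hl (hanti hkl (hφN l)), rfl⟩

lemma exists_infinite_subset_forall {κ : Type*} [Countable κ] {Q : κ → Set ℕ → Prop}
    {M : Set ℕ} (hM : M.Infinite)
    (hmono : ∀ k N N', Q k N → (N' \ N).Finite → Q k N')
    (hdense : ∀ k, ∀ N ⊆ M, N.Infinite → ∃ N' ⊆ N, N'.Infinite ∧ Q k N') :
    ∃ N ⊆ M, N.Infinite ∧ ∀ k, Q k N := by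
  cases isEmpty_or_nonempty κ with
  | inl _ => exact ⟨M, subset_rfl, hM, isEmptyElim⟩
  | inr _ =>
    obtain ⟨e, he⟩ := exists_surjective_nat κ
    have hstep (k : ℕ) (N : {N : Set ℕ // N ⊆ M ∧ N.Infinite}) :
        ∃ N' : {N : Set ℕ // N ⊆ M ∧ N.Infinite}, N'.1 ⊆ N.1 ∧ Q (e k) N'.1 := by
      obtain ⟨N', hsub, hinf, hQ⟩ := hdense (e k) N.1 N.2.1 N.2.2
      exact ⟨⟨N', hsub.trans N.2.1, hinf⟩, hsub, hQ⟩
    choose next hnext_sub hnext using hstep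
    let N (k : ℕ) : {N : Set ℕ // N ⊆ M ∧ N.Infinite} := Nat.rec ⟨M, subset_rfl, hM⟩ next k
    obtain ⟨D, hDM, hD, hDN⟩ := exists_infinite_subset_forall_sdiff_finite
      (antitone_nat_of_succ_le (f := fun k => (N k).1) fun k => hnext_sub k (N k))
      fun k => (N k).2.2
    refine ⟨D, hDM, hD, he.forall.2 fun k => ?_⟩
    exact hmono _ _ _ (hnext k (N k)) (hDN (k + 1))

lemma exists_infinite_of_forall_exists_insert {α : Type*} [DecidableEq α]
    {E : Finset α → Prop} (hempty : E ∅) (hinsert : ∀ F, E F → ∃ a ∉ F, E (insert a F)) :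
    ∃ J : Set α, J.Infinite ∧ ∀ F : Finset α, ↑F ⊆ J → ∃ G, F ⊆ G ∧ E G := by
  have hstep (F : {F // E F}) : ∃ G : {F // E F}, F.1 ⊂ G.1 := by
    obtain ⟨a, ha, hE⟩ := hinsert F.1 F.2
    exact ⟨⟨_, hE⟩, Finset.ssubset_insert ha⟩
  choose next hnext using hstep
  let G (k : ℕ) : {F // E F} := Nat.rec ⟨∅, hempty⟩ (fun _ => next) k
  have hG : StrictMono fun k => (G k).1 := strictMono_nat_of_lt_succ fun k => hnext (G k)
  refine ⟨⋃ k, ((G k).1 : Set α),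
    Set.infinite_iUnion (Finset.coe_injective.comp hG.injective), fun F hF => ?_⟩
  have hdir : Directed (· ⊆ ·) fun k => ((G k).1 : Set α) :=
    Monotone.directed_le fun k l hkl => Finset.coe_subset.2 (hG.monotone hkl)
  obtain ⟨k, hk⟩ := hdir.exists_mem_subset_of_finset_subset_biUnion hF
  exact ⟨(G k).1, Finset.coe_subset.1 hk, (G k).2⟩

end Selection

section SetSystems

variable {S ι : Type*} {A : ℕ → ι → Set S} {T : Set S} {M N : Set ℕ}

/-- The sequence of set systems `(A n i)ᵢ` converges on `T` along `N`: every point of `T` lies, for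
some index `i`, in only finitely many of the sets `A n i` with `n ∈ N`. For `ι = Bool` this is
Rosenthal's notion of convergence for a sequence of pairs of sets. -/
def ConvergesOn (A : ℕ → ι → Set S) (T : Set S) (N : Set ℕ) : Prop :=
  ∀ t ∈ T, ∃ i, {n ∈ N | t ∈ A n i}.Finite

/-- No subsequence of `(A n)`, `n ∈ M`, converges on `T`; subsequences are encoded as infinite
subsets of `M`. -/
def NowhereConvergesOn (A : ℕ → ι → Set S) (T : Set S) (M : Set ℕ) : Prop :=
  ∀ N ⊆ M, N.Infinite → ¬ ConvergesOn A T N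

/-- The set systems `(A n i)ᵢ`, `n ∈ J`, are independent on `T`: choosing one set from each of
finitely many of them, the chosen sets have a common point in `T`. The choice `σ` is total for
convenience; only its values on `F` matter. -/
def IndependentOn (A : ℕ → ι → Set S) (T : Set S) (J : Set ℕ) : Prop :=
  ∀ (F : Finset ℕ) (σ : ℕ → ι), ↑F ⊆ J → (T ∩ ⋂ n ∈ F, A n (σ n)).Nonempty

lemma ConvergesOn.mono_of_sdiff_finite {N' : Set ℕ} (h : ConvergesOn A T N)
    (hdiff : (N' \ N).Finite) : ConvergesOn A T N' := by
  intro t ht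
  obtain ⟨i, hi⟩ := h t ht
  refine ⟨i, (hi.union hdiff).subset fun n hn => ?_⟩
  by_cases hnN : n ∈ N
  · exact Or.inl ⟨hnN, hn.2⟩
  · exact Or.inr ⟨hn.1, hnN⟩

lemma ConvergesOn.mono (h : ConvergesOn A T N) {N' : Set ℕ} (hsub : N' ⊆ N) :
    ConvergesOn A T N' :=
  h.mono_of_sdiff_finite (by simp [Set.sdiff_eq_empty.2 hsub])

lemma convergesOn_of_forall_inter {i : ι} (h : ∀ n ∈ N, ConvergesOn A (T ∩ A n i) N) :
    ConvergesOn A T N := by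
  intro t ht
  by_cases hmem : ∃ n ∈ N, t ∈ A n i
  · obtain ⟨n, hn, htn⟩ := hmem
    exact h n hn t ⟨ht, htn⟩
  · push Not at hmem
    exact ⟨i, by simp [Set.sep_eq_empty_iff_mem_false.2 hmem]⟩

lemma NowhereConvergesOn.mono (h : NowhereConvergesOn A T M) (hsub : N ⊆ M) :
    NowhereConvergesOn A T N :=
  fun K hK => h K (hK.trans hsub)

lemma NowhereConvergesOn.nonempty (h : NowhereConvergesOn A T M) (hM : M.Infinite) :
    T.Nonempty := by
  by_contra hT
  exact h M subset_rfl hM fun t ht => (hT ⟨t, ht⟩).elim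

lemma exists_subset_convergesOn_of_not_nowhereConvergesOn (h : ¬ NowhereConvergesOn A T M) :
    ∃ N ⊆ M, N.Infinite ∧ ConvergesOn A T N := by
  simpa only [NowhereConvergesOn, not_forall, not_not, exists_prop] using h

variable [Finite ι]

lemma exists_forall_nowhereConvergesOn_inter {𝓕 : Set (Set S)} (h𝓕 : 𝓕.Finite)
    (hM : M.Infinite) (h : ∀ T ∈ 𝓕, NowhereConvergesOn A T M) :
    ∃ j ∈ M, ∃ M' ⊆ M, M'.Infinite ∧ ∀ T ∈ 𝓕, ∀ i, NowhereConvergesOn A (T ∩ A j i) M' := by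
  by_contra! hcon
  obtain ⟨N, hNM, hN, hconv⟩ : ∃ N ⊆ M, N.Infinite ∧
      ∀ j : M, ∃ T ∈ 𝓕, ∃ i, ConvergesOn A (T ∩ A j i) N := by
    refine exists_infinite_subset_forall hM ?_ fun j N hNM hN => ?_
    · rintro j N N' ⟨T, hT, i, hTi⟩ hdiff
      exact ⟨T, hT, i, hTi.mono_of_sdiff_finite hdiff⟩
    · obtain ⟨T, hT, i, hTi⟩ := hcon j j.2 N hNM hN
      obtain ⟨N', hN'N, hN', hconv⟩ := exists_subset_convergesOn_of_not_nowhereConvergesOn hTi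
      exact ⟨N', hN'N, hN', T, hT, i, hconv⟩
  obtain ⟨⟨T, i⟩, ⟨hT, -⟩, hK⟩ : ∃ p ∈ 𝓕 ×ˢ (Set.univ : Set ι),
      {j ∈ N | ConvergesOn A (p.1 ∩ A j p.2) N}.Infinite := by
    by_contra! hfin
    refine hN (((h𝓕.prod Set.finite_univ).biUnion hfin).subset fun j hj => ?_)
    obtain ⟨T, hT, i, hTi⟩ := hconv ⟨j, hNM hj⟩
    exact Set.mem_biUnion (x := (T, i)) ⟨hT, trivial⟩ ⟨hj, hTi⟩
  have hKN : {j ∈ N | ConvergesOn A (T ∩ A j i) N} ⊆ N := Set.sep_subset _ _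
  exact h T hT _ (hKN.trans hNM) hK (convergesOn_of_forall_inter fun j hj => hj.2.mono hKN)

lemma finite_range_inter_biInter (A : ℕ → ι → Set S) (T : Set S) (F : Finset ℕ) :
    (Set.range fun σ : ℕ → ι => T ∩ ⋂ n ∈ F, A n (σ n)).Finite := by
  refine (Set.finite_range fun τ : F → ι => T ∩ ⋂ n : F, A n (τ n)).subset ?_
  rintro _ ⟨σ, rfl⟩
  exact ⟨fun n => σ n, by simp only [Set.iInter_subtype]⟩

lemma NowhereConvergesOn.exists_independentOn (hM : M.Infinite) (h : NowhereConvergesOn A T M) :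
    ∃ J ⊆ M, J.Infinite ∧ IndependentOn A T J := by
  let Extendable (F : Finset ℕ) : Prop := ↑F ⊆ M ∧ ∃ N ⊆ M, N.Infinite ∧
    ∀ σ : ℕ → ι, NowhereConvergesOn A (T ∩ ⋂ n ∈ F, A n (σ n)) N
  have hempty : Extendable ∅ := by
    refine ⟨by simp, M, subset_rfl, hM, fun _ => by simpa using h⟩
  have hinsert (F : Finset ℕ) (hF : Extendable F) : ∃ j ∉ F, Extendable (insert j F) := by
    obtain ⟨hFM, N, hNM, hN, hcell⟩ := hF
    obtain ⟨j, hj, N', hN', hN'inf, hnext⟩ := exists_forall_nowhereConvergesOn_inter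
      (finite_range_inter_biInter A T F) (hN.sdiff F.finite_toSet)
      (Set.forall_mem_range.2 fun σ => (hcell σ).mono Set.sdiff_subset)
    refine ⟨j, hj.2, ?_, N', (hN'.trans Set.sdiff_subset).trans hNM, hN'inf, fun σ => ?_⟩
    · rw [Finset.coe_insert]
      exact Set.insert_subset (hNM hj.1) hFM
    · rw [Finset.set_biInter_insert, Set.inter_comm (A j (σ j)), ← Set.inter_assoc]
      exact hnext _ ⟨σ, rfl⟩ (σ j)
  obtain ⟨J, hJ, hJext⟩ := exists_infinite_of_forall_exists_insert hempty hinsert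
  refine ⟨J, fun j hj => ?_, hJ, fun F σ hFJ => ?_⟩
  · obtain ⟨G, hG, hGM, -⟩ := hJext {j} (by simpa using hj)
    exact hGM (hG (Finset.mem_singleton_self j))
  · obtain ⟨G, hFG, -, N, -, hN, hcell⟩ := hJext F hFJ
    exact ((hcell σ).nonempty hN).mono
      (Set.inter_subset_inter_right _ (Set.biInter_mono hFG fun _ _ => subset_rfl))

theorem exists_convergesOn_or_exists_independentOn (A : ℕ → ι → Set S) (T : Set S)
    (hM : M.Infinite) :
    (∃ N ⊆ M, N.Infinite ∧ ConvergesOn A T N) ∨ ∃ J ⊆ M, J.Infinite ∧ IndependentOn A T J := by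
  by_cases h : NowhereConvergesOn A T M
  · exact Or.inr (h.exists_independentOn hM)
  · exact Or.inl (exists_subset_convergesOn_of_not_nowhereConvergesOn h)

end SetSystems

section RealFunctions

variable {S : Type*} {u : ℕ → S → ℝ} {T : Set S}

/-- The pairs of level sets `{u n < a}` (index `false`) and `{b < u n}` (index `true`) of a sequence
of real functions. -/
def levelSets (u : ℕ → S → ℝ) (a b : ℝ) (n : ℕ) : Bool → Set S
  | false => {t | u n t < a}
  | true => {t | b < u n t}

lemma limsup_sub_liminf_le_of_forall_rat {α : Type*} {l : Filter α} [NeBot l] {v : α → ℝ} {δ : ℝ}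
    (hle : IsBoundedUnder (· ≤ ·) l v) (hge : IsBoundedUnder (· ≥ ·) l v)
    (h : ∀ a b : ℚ, δ < b - a → (∃ᶠ k in l, v k < a) → ¬ ∃ᶠ k in l, b < v k) :
    limsup v l - liminf v l ≤ δ := by
  by_contra! hlt
  obtain ⟨a, hav, haδ⟩ := exists_rat_btwn (show liminf v l < limsup v l - δ by linarith)
  obtain ⟨b, hab, hbv⟩ := exists_rat_btwn (show (a : ℝ) + δ < limsup v l by linarith)
  exact h a b (by linarith) (frequently_lt_of_liminf_lt hle.isCoboundedUnder_ge hav)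
    (frequently_lt_of_lt_limsup hge.isCoboundedUnder_le hbv)

lemma ConvergesOn.not_frequently_levelSets {a b : ℝ} {φ : ℕ → ℕ} (hφ : StrictMono φ)
    (h : ConvergesOn (levelSets u a b) T (Set.range φ)) {t : S} (ht : t ∈ T)
    (ha : ∃ᶠ k in atTop, u (φ k) t < a) : ¬ ∃ᶠ k in atTop, b < u (φ k) t := by
  intro hb
  rw [Nat.frequently_atTop_iff_infinite] at ha hb
  obtain ⟨i, hi⟩ := h t ht
  have hpre : {k | t ∈ levelSets u a b (φ k) i}.Finite :=
    (hi.preimage hφ.injective.injOn).subset fun k hk => ⟨Set.mem_range_self k, hk⟩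
  cases i with
  | false => exact ha hpre
  | true => exact hb hpre

theorem exists_subseq_limsup_sub_liminf_le {δ : ℝ}
    (hbdd : ∀ t ∈ T, ∃ C, ∀ n, |u n t| ≤ C)
    (h : ∀ a b : ℝ, δ < b - a → ∀ J : Set ℕ, J.Infinite → ¬ IndependentOn (levelSets u a b) T J) :
    ∃ φ : ℕ → ℕ, StrictMono φ ∧ ∀ t ∈ T,
      limsup (fun k => u (φ k) t) atTop - liminf (fun k => u (φ k) t) atTop ≤ δ := by
  obtain ⟨N, -, hN, hconv⟩ : ∃ N ⊆ Set.univ, N.Infinite ∧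
      ∀ p : {p : ℚ × ℚ // δ < p.2 - p.1}, ConvergesOn (levelSets u p.1.1 p.1.2) T N := by
    refine exists_infinite_subset_forall Set.infinite_univ
      (fun _ _ _ => ConvergesOn.mono_of_sdiff_finite) fun p M _ hM => ?_
    refine (exists_convergesOn_or_exists_independentOn _ T hM).resolve_right ?_
    rintro ⟨J, -, hJ, hind⟩
    exact h _ _ p.2 J hJ hind
  have hφ : StrictMono (Nat.nth (· ∈ N)) := Nat.nth_strictMono hN
  have hrange : Set.range (Nat.nth (· ∈ N)) = N := Nat.range_nth_of_infinite hN
  refine ⟨Nat.nth (· ∈ N), hφ, fun t ht => ?_⟩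
  obtain ⟨C, hC⟩ := hbdd t ht
  refine limsup_sub_liminf_le_of_forall_rat
    (isBoundedUnder_of ⟨C, fun k => (abs_le.1 (hC _)).2⟩)
    (isBoundedUnder_of ⟨-C, fun k => (abs_le.1 (hC _)).1⟩) fun a b hab => ?_
  refine ConvergesOn.not_frequently_levelSets hφ ?_ ht
  rw [hrange]
  exact hconv ⟨(a, b), hab⟩

lemma abs_mul_sub_le_of_mem_levelSets {a b c : ℝ} {n : ℕ} {s t : S}
    (hs : s ∈ levelSets u a b n (decide (0 ≤ c)))
    (ht : t ∈ levelSets u a b n (!decide (0 ≤ c))) :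
    |c| * (b - a) ≤ c * (u n s - u n t) := by
  rcases le_or_gt 0 c with hc | hc
  · simp only [hc, decide_true, Bool.not_true, levelSets, Set.mem_ofPred_eq] at hs ht
    rw [abs_of_nonneg hc]
    exact mul_le_mul_of_nonneg_left (by linarith) hc
  · simp only [hc.not_ge, decide_false, Bool.not_false, levelSets, Set.mem_ofPred_eq] at hs ht
    rw [abs_of_neg hc, neg_mul, ← mul_neg]
    exact mul_le_mul_of_nonpos_left (by linarith) hc.le

lemma IndependentOn.exists_sum_abs_mul_le {a b : ℝ} {J : Set ℕ}
    (h : IndependentOn (levelSets u a b) T J) {F : Finset ℕ} (hF : ↑F ⊆ J) (c : ℕ → ℝ) :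
    ∃ s ∈ T, ∃ t ∈ T, (∑ n ∈ F, |c n|) * (b - a) ≤ ∑ n ∈ F, c n * (u n s - u n t) := by
  obtain ⟨s, hsT, hs⟩ := h F (fun n => decide (0 ≤ c n)) hF
  obtain ⟨t, htT, ht⟩ := h F (fun n => !decide (0 ≤ c n)) hF
  rw [Set.mem_iInter₂] at hs ht
  refine ⟨s, hsT, t, htT, ?_⟩
  rw [Finset.sum_mul]
  exact Finset.sum_le_sum fun n hn => abs_mul_sub_le_of_mem_levelSets (hs n hn) (ht n hn)

end RealFunctions

lemma IndependentOn.sum_abs_mul_le_two_mul_norm {X : Type*} [SeminormedAddCommGroup X]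
    [NormedSpace ℝ X] {x : ℕ → X} {a b : ℝ} {J : Set ℕ}
    (h : IndependentOn (levelSets (fun n (f : X →L[ℝ] ℝ) => f (x n)) a b)
      (Metric.closedBall 0 1) J)
    {F : Finset ℕ} (hF : ↑F ⊆ J) (c : ℕ → ℝ) :
    (∑ n ∈ F, |c n|) * (b - a) ≤ 2 * ‖∑ n ∈ F, c n • x n‖ := by
  obtain ⟨f, hf, g, hg, hle⟩ := h.exists_sum_abs_mul_le hF c
  rw [mem_closedBall_zero_iff] at hf hg
  calc (∑ n ∈ F, |c n|) * (b - a)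
      ≤ ∑ n ∈ F, c n * (f (x n) - g (x n)) := hle
    _ = (f - g) (∑ n ∈ F, c n • x n) := by simp [map_sum]
    _ ≤ ‖f - g‖ * ‖∑ n ∈ F, c n • x n‖ := (le_abs_self _).trans ((f - g).le_opNorm _)
    _ ≤ 2 * ‖∑ n ∈ F, c n • x n‖ := by
      gcongr
      linarith [norm_sub_le f g]

end QuantitativeRosenthal

lemma AdmitsL1Blocks.exists_finset {𝕜 : Type*} [RCLike 𝕜] {X : Type*} [NormedAddCommGroup X]
    [NormedSpace 𝕜 X] {x : ℕ → X} {ε : ℝ} (h : AdmitsL1Blocks 𝕜 x ε) {M : Set ℕ}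
    (hM : M.Infinite) :
    ∃ (F : Finset ℕ) (c : ℕ → 𝕜), ↑F ⊆ M ∧ ∑ n ∈ F, ‖c n‖ = 1 ∧ ‖∑ n ∈ F, c n • x n‖ ≤ ε := by
  obtain ⟨r, i, a, hi, hiM, ha, hnorm⟩ := h M hM
  have hext (ρ : Fin r) : Function.extend i a 0 (i ρ) = a ρ := hi.injective.extend_apply a 0 ρ
  refine ⟨Finset.univ.map ⟨i, hi.injective⟩, Function.extend i a 0, ?_, ?_, ?_⟩
  · simpa [Set.range_subset_iff] using hiM
  · simpa [hext] using ha
  · simpa [hext] using hnorm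

open QuantitativeRosenthal in
theorem quantitative_rosenthal_real_general {X : Type*} [NormedAddCommGroup X] [NormedSpace ℝ X]
    (x : ℕ → X) (hb : ∃ C : ℝ, ∀ n, ‖x n‖ ≤ C) {ε : ℝ} (h : AdmitsL1Blocks ℝ x ε) :
    ∃ n : ℕ → ℕ, StrictMono n ∧
      ∀ x' : X →L[ℝ] ℝ, ‖x'‖ ≤ 1 →
        limsup (fun k => x' (x (n k))) atTop -
          liminf (fun k => x' (x (n k))) atTop ≤ 2 * ε := by
  obtain ⟨C, hC⟩ := hb
  obtain ⟨n, hn, hle⟩ := exists_subseq_limsup_sub_liminf_le (u := fun n (f : X →L[ℝ] ℝ) => f (x n))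
    (T := Metric.closedBall 0 1) (δ := 2 * ε)
    (fun f _ => ⟨‖f‖ * C, fun n => f.le_opNorm_of_le (hC n)⟩)
    fun a b hab J hJ hind => by
      obtain ⟨F, c, hFJ, hc, hnorm⟩ := h.exists_finset hJ
      have hlower := hind.sum_abs_mul_le_two_mul_norm hFJ c
      simp only [Real.norm_eq_abs] at hc
      rw [hc] at hlower
      linarith
  exact ⟨n, hn, fun x' hx' => hle x' (mem_closedBall_zero_iff.2 hx')⟩

/-- **Quantitative version of Rosenthal's `ℓ¹`-theorem, real case.**
If a bounded sequence in a real Banach space admits `ε`-`ℓ¹`-blocks then it has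
a subsequence which is close to being weakly Cauchy: for every normalized
functional `x'`, `limsup x'(x_{n_k}) - liminf x'(x_{n_k}) ≤ 2ε`. -/
theorem quantitative_rosenthal_real {X : Type*} [NormedAddCommGroup X]
    [NormedSpace ℝ X] [CompleteSpace X]
    (x : ℕ → X) (hb : ∃ C : ℝ, ∀ n, ‖x n‖ ≤ C) {ε : ℝ} (hε : 0 < ε)
    (h : AdmitsL1Blocks ℝ x ε) :
    ∃ n : ℕ → ℕ, StrictMono n ∧
      ∀ x' : X →L[ℝ] ℝ, ‖x'‖ = 1 →
        limsup (fun k => x' (x (n k))) atTop -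
          liminf (fun k => x' (x (n k))) atTop ≤ 2 * ε := by
  obtain ⟨n, hn, hle⟩ := quantitative_rosenthal_real_general x hb h
  exact ⟨n, hn, fun x' hx' => hle x' hx'.le⟩
end

section
/- Let $X$ be a complex Banach space, let $(x_n)$ be a bounded sequence in $X$, and let $\varepsilon > 0$. Suppose $(x_n)$ admits $\varepsilon$-$\ell^1$-blocks. Then there is a subsequence $(x_{n_k})$ such that for every $x' \in X'$ with $\|x'\| = 1$, the diameter of the set of accumulation points of the sequence $(x'(x_{n_k}))_k$ in $\mathbb{C}$ is at most $8\varepsilon/\sqrt{2}$. -/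
open Filter

/-!
A lower bound `Σ ‖a ρ‖ ≤ 2 ‖Σ ± a ρ‖` for a suitable choice of signs (the loss of a factor `2` comes
from splitting into real and imaginary parts) shows the following: if for every choice of signs
some functional of norm at most `1` takes values near `m ± d` at the corresponding members of the
block, then the half difference of the functionals for a choice of signs and for the opposite one
takes values near `± d`, so that evaluating it at the block gives `‖d‖ ≤ 2 ε` up to a small error.

Hence, over a sequence with `ε`-`ℓ¹`-blocks, the sets of functionals with values near `m + d`
and near `m - d` are independent along no infinite set of indices as soon as `2 ε < ‖d‖`. By
Rosenthal's dichotomy every infinite set of indices has an infinite subset along which no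
functional comes near both points infinitely often. It is enough to exclude a dense sequence of
pairs `(m, d)`, and a diagonal subsequence excludes all of them. If `z` and `w` are accumulation
points, taking `m` and `d` close to `(z + w) / 2` and `(z - w) / 2` then gives `‖z - w‖ ≤ 4 ε`,
and `4 ≤ 8 / √2`.
-/

open Set Metric Topology

/-! ### Diagonal sequences -/

theorem exists_strictMono_fusion {α β : Type*} [Preorder α] (N : β → Set α)
    (R : β → α → β → Prop) (step : ∀ p, ∃ n ∈ N p, ∃ q, N q ⊆ N p ∩ Ioi n ∧ R p n q) (p₀ : β) :
    ∃ (n : ℕ → α) (p : ℕ → β), p 0 = p₀ ∧ StrictMono n ∧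
      (∀ ⦃j k⦄, j ≤ k → n k ∈ N (p j)) ∧ ∀ k, R (p k) (n k) (p (k + 1)) := by
  choose f hf g hg hR using step
  let p : ℕ → β := fun k ↦ g^[k] p₀
  have p_succ (k : ℕ) : p (k + 1) = g (p k) := Function.iterate_succ_apply' ..
  have hsub (k : ℕ) : N (p (k + 1)) ⊆ N (p k) ∩ Ioi (f (p k)) := p_succ k ▸ hg (p k)
  have hanti : Antitone (N ∘ p) := antitone_nat_of_succ_le fun k ↦ (hsub k).trans inter_subset_left
  refine ⟨f ∘ p, p, rfl, strictMono_nat_of_lt_succ fun k ↦ (hsub k (hf _)).2,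
    fun j k hjk ↦ hanti hjk (hf _), fun k ↦ ?_⟩
  rw [p_succ]
  exact hR (p k)

theorem finite_range_sdiff_of_forall_lt {α κ : Type*} [LinearOrder κ] [LocallyFiniteOrderBot κ]
    {n : κ → α} {N : Set α} {k : κ} (h : ∀ j, k < j → n j ∈ N) : (range n \ N).Finite := by
  refine ((finite_Iic k).image n).subset ?_
  rintro _ ⟨⟨j, rfl⟩, hj⟩
  exact mem_image_of_mem n (not_lt.1 fun hkj ↦ hj (h j hkj))

theorem exists_infinite_forall_of_finite_sdiff {P : ℕ → Set ℕ → Prop}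
    (hP : ∀ ⦃k M N⦄, (N \ M).Finite → P k M → P k N)
    (hdense : ∀ k M, M.Infinite → ∃ N ⊆ M, N.Infinite ∧ P k N) :
    ∃ M : Set ℕ, M.Infinite ∧ ∀ k, P k M := by
  let Stage := ℕ × {M : Set ℕ // M.Infinite}
  have step (p : Stage) : ∃ n ∈ p.2.1, ∃ q : Stage, q.2.1 ⊆ p.2.1 ∩ Ioi n ∧
      (q.1 = p.1 + 1 ∧ P p.1 q.2.1) := by
    obtain ⟨k, M, hM⟩ := p
    obtain ⟨n, hn⟩ := hM.nonempty
    obtain ⟨N, hNM, hN, hPN⟩ := hdense k (M \ Iic n) (hM.sdiff (finite_Iic n))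
    exact ⟨n, hn, (k + 1, ⟨N, hN⟩), fun m hm ↦ by simpa using hNM hm, rfl, hPN⟩
  obtain ⟨n, p, hp₀, hn, hmem, hp⟩ := exists_strictMono_fusion (fun p : Stage ↦ p.2.1) _ step
    (0, ⟨univ, infinite_univ⟩)
  have p_fst (k : ℕ) : (p k).1 = k := by
    induction k with
    | zero => rw [hp₀]
    | succ k ih => rw [(hp k).1, ih]
  refine ⟨range n, infinite_range_of_injective hn.injective, fun k ↦ ?_⟩
  exact hP (finite_range_sdiff_of_forall_lt fun j hkj ↦ hmem hkj) (p_fst k ▸ (hp k).2)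

/-! ### Rosenthal's dichotomy -/

section Dichotomy

variable {S ι : Type*} {A : ι → ℕ → Set S}

/-- The point `x` oscillates along `N` between the sequences of sets `A b`: it lies in infinitely
many of the sets `A b n` with `n ∈ N`, for each `b`. -/
def OscillatesOn (A : ι → ℕ → Set S) (N : Set ℕ) (x : S) : Prop :=
  ∀ b, {n ∈ N | x ∈ A b n}.Infinite

/-- Along every infinite subset of `M`, some point of `T` oscillates between the sequences `A b`.
This is the induction hypothesis in the construction of independent sequences of sets. -/
def HereditarilyOscillates (A : ι → ℕ → Set S) (T : Set S) (M : Set ℕ) : Prop :=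
  ∀ N ⊆ M, N.Infinite → ∃ x ∈ T, OscillatesOn A N x

/-- The sets `A b n` with `n ∈ L` are independent: a finite intersection in which every index
`n ∈ L` occurs at most once, with an arbitrary choice of `b`, is nonempty. -/
def IndependentOn (A : ι → ℕ → Set S) (L : Set ℕ) : Prop :=
  ∀ F : Finset ℕ, ↑F ⊆ L → ∀ σ : ℕ → ι, ∃ x, ∀ n ∈ F, x ∈ A (σ n) n

theorem OscillatesOn.of_finite_sdiff {M N : Set ℕ} {x : S} (hx : OscillatesOn A N x)
    (h : (N \ M).Finite) : OscillatesOn A M x := fun b ↦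
  ((hx b).sdiff h).mono fun _ hn ↦ ⟨not_not.1 fun hM ↦ hn.2 ⟨hn.1.1, hM⟩, hn.1.2⟩

theorem HereditarilyOscillates.nonempty {T : Set S} {M : Set ℕ}
    (h : HereditarilyOscillates A T M) (hM : M.Infinite) : T.Nonempty :=
  (h M subset_rfl hM).imp fun _ ↦ And.left

theorem IndependentOn.exists_forall_mem [Nonempty ι] {L : Set ℕ} (hL : IndependentOn A L)
    {κ : Type*} [Finite κ] {i : κ → ℕ} (hi : i.Injective) (hiL : ∀ ρ, i ρ ∈ L) (s : κ → ι) :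
    ∃ x, ∀ ρ, x ∈ A (s ρ) (i ρ) := by
  obtain ⟨x, hx⟩ := hL (finite_range i).toFinset (by simpa [range_subset_iff] using hiL)
    (Function.extend i s fun _ ↦ Classical.arbitrary ι)
  exact ⟨x, fun ρ ↦ by simpa [hi.extend_apply] using hx (i ρ) (by simp)⟩

variable [Finite ι]

/-- If every choice failed, it would fail with the same `T` and `b` for infinitely many members
`n k` of a fusion sequence. A point of `T` oscillating along these `n k` lies in some `A b (n k)`,
and it contradicts the failure at `n k`. -/
theorem exists_hereditarilyOscillates_inter {F : Set (Set S)} (hF : F.Finite) {M : Set ℕ}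
    (hM : M.Infinite) (hosc : ∀ T ∈ F, HereditarilyOscillates A T M) :
    ∃ n ∈ M, ∃ N ⊆ M ∩ Ioi n, N.Infinite ∧
      ∀ T ∈ F, ∀ b, HereditarilyOscillates A (T ∩ A b n) N := by
  by_contra! hfail
  have step (p : {N : Set ℕ // N ⊆ M ∧ N.Infinite}) :
      ∃ n ∈ p.1, ∃ q : {N : Set ℕ // N ⊆ M ∧ N.Infinite}, q.1 ⊆ p.1 ∩ Ioi n ∧
        ∃ c : F × ι, ∀ x ∈ c.1.1 ∩ A c.2 n, ¬ OscillatesOn A q.1 x := by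
    obtain ⟨N, hNM, hN⟩ := p
    obtain ⟨n, hn⟩ := hN.nonempty
    have htail : N \ Iic n ⊆ N ∩ Ioi n := fun m hm ↦ by simpa using hm
    obtain ⟨T, hT, b, hb⟩ := hfail n (hNM hn) (N \ Iic n)
      (htail.trans (inter_subset_inter_left _ hNM)) (hN.sdiff (finite_Iic n))
    simp only [HereditarilyOscillates, not_forall, not_exists, not_and] at hb
    obtain ⟨N', hN', hN'inf, hosc'⟩ := hb
    exact ⟨n, hn, ⟨N', (hN'.trans sdiff_subset).trans hNM, hN'inf⟩, hN'.trans htail,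
      (⟨T, hT⟩, b), hosc'⟩
  obtain ⟨n, p, -, hn, hmem, hp⟩ := exists_strictMono_fusion Subtype.val _ step ⟨M, subset_rfl, hM⟩
  choose c hc using hp
  have : Finite F := hF
  obtain ⟨⟨⟨T, hT⟩, b⟩, hTb⟩ := Finite.exists_infinite_fiber c
  obtain ⟨x, hxT, hx⟩ := hosc T hT (n '' (c ⁻¹' {(⟨T, hT⟩, b)}))
    (image_subset_iff.2 fun k _ ↦ (p 0).2.1 (hmem k.zero_le))
    ((infinite_coe_iff.1 hTb).image hn.injective.injOn)
  obtain ⟨_, ⟨k, hk : c k = (⟨T, hT⟩, b), rfl⟩, hxk⟩ := (hx b).nonempty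
  refine hc k x (by rw [hk]; exact ⟨hxT, hxk⟩) (hx.of_finite_sdiff ?_)
  exact (finite_range_sdiff_of_forall_lt fun j hkj ↦ hmem hkj).subset
    (sdiff_subset_sdiff_left (image_subset_range _ _))

theorem HereditarilyOscillates.exists_independentOn {M : Set ℕ}
    (h : HereditarilyOscillates A univ M) (hM : M.Infinite) :
    ∃ L ⊆ M, L.Infinite ∧ IndependentOn A L := by
  let Stage := {p : Set (Set S) × Set ℕ //
    p.1.Finite ∧ p.2.Infinite ∧ ∀ T ∈ p.1, HereditarilyOscillates A T p.2}
  have step (p : Stage) : ∃ n ∈ p.1.2, ∃ q : Stage, q.1.2 ⊆ p.1.2 ∩ Ioi n ∧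
      ∀ T ∈ p.1.1, ∀ b, T ∩ A b n ∈ q.1.1 := by
    obtain ⟨⟨F, N⟩, hF, hN, hosc⟩ := p
    obtain ⟨n, hn, N', hN', hN'inf, hosc'⟩ := exists_hereditarilyOscillates_inter hF hN hosc
    exact ⟨n, hn, ⟨(image2 (fun T b ↦ T ∩ A b n) F univ, N'), hF.image2 _ finite_univ, hN'inf,
      forall_mem_image2.2 fun T hT b _ ↦ hosc' T hT b⟩, hN',
      fun T hT b ↦ mem_image2_of_mem hT (mem_univ b)⟩
  obtain ⟨n, p, hp₀, hn, hmem, hp⟩ := exists_strictMono_fusion (fun p : Stage ↦ p.1.2) _ step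
    ⟨({univ}, M), finite_singleton _, hM, by simpa using h⟩
  refine ⟨range n, range_subset_iff.2 fun k ↦ ?_, infinite_range_of_injective hn.injective,
    fun F hF σ ↦ ?_⟩
  · simpa [hp₀] using hmem k.zero_le
  have hcell (k : ℕ) : ∃ T ∈ (p k).1.1, ∀ x ∈ T, ∀ j < k, x ∈ A (σ (n j)) (n j) := by
    induction k with
    | zero => exact ⟨univ, by simp [hp₀], by simp⟩
    | succ k ih =>
      obtain ⟨T, hT, hTσ⟩ := ih
      exact ⟨T ∩ A (σ (n k)) (n k), hp k T hT _, fun x hx ↦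
        Nat.forall_lt_succ_right.2 ⟨hTσ x hx.1, hx.2⟩⟩
  obtain ⟨T, hT, hTσ⟩ := hcell (F.sup id + 1)
  obtain ⟨x, hx⟩ := ((p _).2.2.2 T hT).nonempty (p _).2.2.1
  refine ⟨x, fun m hm ↦ ?_⟩
  obtain ⟨j, rfl⟩ := hF hm
  exact hTσ x hx j (Nat.lt_succ_of_le ((hn.id_le j).trans (Finset.le_sup (f := id) hm)))

theorem exists_infinite_forall_not_oscillatesOn {A : ℕ → ι → ℕ → Set S}
    (h : ∀ k L, L.Infinite → ¬ IndependentOn (A k) L) :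
    ∃ M : Set ℕ, M.Infinite ∧ ∀ k x, ¬ OscillatesOn (A k) M x := by
  refine exists_infinite_forall_of_finite_sdiff
    (fun k M N hNM hM x hx ↦ hM x (hx.of_finite_sdiff hNM)) fun k M hM ↦ ?_
  by_contra! hosc
  have hM_osc : HereditarilyOscillates (A k) univ M := fun N hNM hN ↦ by
    simpa using hosc N hNM hN
  obtain ⟨L, -, hL, hind⟩ := hM_osc.exists_independentOn hM
  exact h k L hL hind

end Dichotomy

/-! ### Accumulation points -/

theorem infinite_mem_range_of_mapClusterPt {Y : Type*} [TopologicalSpace Y] {u : ℕ → Y}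
    {n : ℕ → ℕ} (hn : n.Injective) {z : Y} (hz : MapClusterPt z atTop (u ∘ n))
    {U : Set Y} (hU : U ∈ 𝓝 z) : {k ∈ range n | u k ∈ U}.Infinite := by
  refine ((Nat.frequently_atTop_iff_infinite.1 (hz.frequently hU)).image hn.injOn).mono ?_
  rintro _ ⟨k, hk, rfl⟩
  exact ⟨mem_range_self k, hk⟩

theorem exists_mem_ball_add_and_mem_ball_sub {E : Type*} [SeminormedAddCommGroup E]
    [NormedSpace ℝ E] {κ : Type*} {c : κ → E × E} (hc : DenseRange c) {ε : ℝ} {z w : E}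
    (hzw : 4 * ε < dist z w) :
    ∃ k, z ∈ ball ((c k).1 + (c k).2) ((‖(c k).2‖ - 2 * ε) / 3) ∧
      w ∈ ball ((c k).1 - (c k).2) ((‖(c k).2‖ - 2 * ε) / 3) := by
  let r (p : E × E) : ℝ := (‖p.2‖ - 2 * ε) / 3
  have hopen : IsOpen {p : E × E | dist z (p.1 + p.2) < r p ∧ dist w (p.1 - p.2) < r p} := by
    refine IsOpen.and ?_ ?_ <;> exact isOpen_lt (by fun_prop) (by fun_prop)
  refine hc.exists_mem_open hopen ⟨((2⁻¹ : ℝ) • (z + w), (2⁻¹ : ℝ) • (z - w)), ?_⟩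
  have hz : (2⁻¹ : ℝ) • (z + w) + (2⁻¹ : ℝ) • (z - w) = z := by module
  have hw : (2⁻¹ : ℝ) • (z + w) - (2⁻¹ : ℝ) • (z - w) = w := by module
  have hr : 0 < r ((2⁻¹ : ℝ) • (z + w), (2⁻¹ : ℝ) • (z - w)) := by
    simp only [r, norm_smul, norm_inv, Real.norm_ofNat, ← dist_eq_norm]
    linarith
  exact ⟨by simpa only [hz, dist_self] using hr, by simpa only [hw, dist_self] using hr⟩

/-! ### Blocks and independence -/

theorem exists_units_zsmul_eq_abs {G : Type*} [AddCommGroup G] [LinearOrder G] (t : G) :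
    ∃ s : ℤˣ, s • t = |t| := by
  rcases abs_choice t with ht | ht
  · exact ⟨1, by rw [ht, one_smul]⟩
  · exact ⟨-1, by rw [ht, Units.neg_smul, one_smul]⟩

theorem norm_sum_units_zsmul_mul_norm_le {𝕜 X κ : Type*} [NontriviallyNormedField 𝕜]
    [SeminormedAddCommGroup X] [NormedSpace 𝕜 X] [Fintype κ] {f : StrongDual 𝕜 X} (hf : ‖f‖ ≤ 1)
    {v : κ → X} (a : κ → 𝕜) {s : κ → ℤˣ} {d : 𝕜} {δ : ℝ}
    (hfv : ∀ ρ, ‖f (v ρ) - s ρ • d‖ ≤ δ) :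
    ‖∑ ρ, s ρ • a ρ‖ * ‖d‖ ≤ ‖∑ ρ, a ρ • v ρ‖ + (∑ ρ, ‖a ρ‖) * δ := by
  have hsplit : (∑ ρ, s ρ • a ρ) * d =
      f (∑ ρ, a ρ • v ρ) - ∑ ρ, a ρ * (f (v ρ) - s ρ • d) := by
    simp only [map_sum, map_smul, smul_eq_mul, Finset.sum_mul, ← Finset.sum_sub_distrib,
      Units.smul_def, zsmul_eq_mul]
    exact Finset.sum_congr rfl fun ρ _ ↦ by ring
  calc ‖∑ ρ, s ρ • a ρ‖ * ‖d‖
    _ = ‖f (∑ ρ, a ρ • v ρ) - ∑ ρ, a ρ * (f (v ρ) - s ρ • d)‖ := by rw [← norm_mul, hsplit]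
    _ ≤ ‖f (∑ ρ, a ρ • v ρ)‖ + ‖∑ ρ, a ρ * (f (v ρ) - s ρ • d)‖ := norm_sub_le _ _
    _ ≤ ‖∑ ρ, a ρ • v ρ‖ + (∑ ρ, ‖a ρ‖) * δ := by
      gcongr
      · simpa using f.le_of_opNorm_le hf (∑ ρ, a ρ • v ρ)
      · rw [Finset.sum_mul]
        exact norm_sum_le_of_le _ fun ρ _ ↦ by rw [norm_mul]; gcongr; exact hfv ρ

section Blocks

variable {𝕜 : Type*} [RCLike 𝕜]

theorem norm_le_abs_re_add_abs_im (z : 𝕜) : ‖z‖ ≤ |RCLike.re z| + |RCLike.im z| := by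
  have hI : ‖(RCLike.I : 𝕜)‖ ≤ 1 := by
    rw [RCLike.norm_I]
    split_ifs <;> norm_num
  calc ‖z‖ = ‖(RCLike.re z : 𝕜) + RCLike.im z * RCLike.I‖ := by rw [RCLike.re_add_im]
    _ ≤ |RCLike.re z| + |RCLike.im z| * ‖(RCLike.I : 𝕜)‖ := by
      simpa using norm_add_le (RCLike.re z : 𝕜) (RCLike.im z * RCLike.I)
    _ ≤ |RCLike.re z| + |RCLike.im z| := by
      gcongr
      exact mul_le_of_le_one_right (abs_nonneg _) hI

theorem exists_sum_norm_le_two_mul_norm_sum_units_zsmul {κ : Type*} [Fintype κ] (a : κ → 𝕜) :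
    ∃ s : κ → ℤˣ, ∑ ρ, ‖a ρ‖ ≤ 2 * ‖∑ ρ, s ρ • a ρ‖ := by
  choose s hs using fun ρ ↦ exists_units_zsmul_eq_abs (RCLike.re (a ρ))
  choose t ht using fun ρ ↦ exists_units_zsmul_eq_abs (RCLike.im (a ρ))
  have hre : ∑ ρ, |RCLike.re (a ρ)| ≤ ‖∑ ρ, s ρ • a ρ‖ := by
    simpa [← hs] using RCLike.re_le_norm (∑ ρ, s ρ • a ρ)
  have him : ∑ ρ, |RCLike.im (a ρ)| ≤ ‖∑ ρ, t ρ • a ρ‖ := by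
    simpa [← ht] using RCLike.im_le_norm (∑ ρ, t ρ • a ρ)
  have hsum : ∑ ρ, ‖a ρ‖ ≤ ∑ ρ, |RCLike.re (a ρ)| + ∑ ρ, |RCLike.im (a ρ)| := by
    rw [← Finset.sum_add_distrib]
    exact Finset.sum_le_sum fun ρ _ ↦ norm_le_abs_re_add_abs_im (a ρ)
  rcases le_total ‖∑ ρ, s ρ • a ρ‖ ‖∑ ρ, t ρ • a ρ‖ with hst | hst
  · exact ⟨t, by linarith⟩
  · exact ⟨s, by linarith⟩

variable {X : Type*} [NormedAddCommGroup X] [NormedSpace 𝕜 X]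

/-- The functionals in the dual unit ball whose value at `x n` is within `δ` of `m + d` (for the
sign `1`) or of `m - d` (for the sign `-1`). Parametrizing two points by midpoint and half
difference makes the half difference of two such functionals for opposite signs lie near `± d`. -/
def functionalsNear (x : ℕ → X) (m d : 𝕜) (δ : ℝ) (s : ℤˣ) (n : ℕ) :
    Set (closedBall (0 : StrongDual 𝕜 X) 1) :=
  {f | f.1 (x n) ∈ ball (m + s • d) δ}

variable {x : ℕ → X} {ε : ℝ}

theorem exists_norm_sub_units_zsmul_le_of_independentOn {m d : 𝕜} {δ : ℝ} {L : Set ℕ}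
    (hL : IndependentOn (functionalsNear x m d δ) L) {κ : Type*} [Finite κ] {i : κ → ℕ}
    (hi : i.Injective) (hiL : ∀ ρ, i ρ ∈ L) (s : κ → ℤˣ) :
    ∃ f : StrongDual 𝕜 X, ‖f‖ ≤ 1 ∧ ∀ ρ, ‖f (x (i ρ)) - s ρ • d‖ ≤ δ := by
  obtain ⟨⟨f, hf⟩, hfs⟩ := hL.exists_forall_mem hi hiL s
  obtain ⟨⟨g, hg⟩, hgs⟩ := hL.exists_forall_mem hi hiL (-s)
  rw [mem_closedBall_zero_iff] at hf hg
  refine ⟨(2⁻¹ : 𝕜) • (f - g), ?_, fun ρ ↦ ?_⟩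
  · rw [norm_smul, norm_inv, RCLike.norm_two]
    linarith [norm_sub_le f g]
  · have hfρ : ‖f (x (i ρ)) - (m + s ρ • d)‖ < δ := mem_ball_iff_norm.1 (hfs ρ)
    have hgρ : ‖g (x (i ρ)) - (m + -s ρ • d)‖ < δ := mem_ball_iff_norm.1 (hgs ρ)
    have hsplit : ((2⁻¹ : 𝕜) • (f - g)) (x (i ρ)) - s ρ • d =
        2⁻¹ * ((f (x (i ρ)) - (m + s ρ • d)) - (g (x (i ρ)) - (m + -s ρ • d))) := by
      simp only [smul_apply, sub_apply, smul_eq_mul, Units.neg_smul]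
      ring
    rw [hsplit, norm_mul, norm_inv, RCLike.norm_two]
    linarith [norm_sub_le (f (x (i ρ)) - (m + s ρ • d)) (g (x (i ρ)) - (m + -s ρ • d))]

theorem AdmitsL1Blocks.norm_le_of_independentOn (h : AdmitsL1Blocks 𝕜 x ε) {m d : 𝕜} {δ : ℝ}
    {L : Set ℕ} (hL : L.Infinite) (hind : IndependentOn (functionalsNear x m d δ) L) :
    ‖d‖ ≤ 2 * (ε + δ) := by
  obtain ⟨r, i, a, hi, hiL, ha, hblock⟩ := h L hL
  obtain ⟨s, hs⟩ := exists_sum_norm_le_two_mul_norm_sum_units_zsmul a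
  obtain ⟨f, hf, hfs⟩ := exists_norm_sub_units_zsmul_le_of_independentOn hind hi.injective hiL s
  calc ‖d‖ = (∑ ρ, ‖a ρ‖) * ‖d‖ := by rw [ha, one_mul]
    _ ≤ 2 * ‖∑ ρ, s ρ • a ρ‖ * ‖d‖ := by gcongr
    _ = 2 * (‖∑ ρ, s ρ • a ρ‖ * ‖d‖) := mul_assoc ..
    _ ≤ 2 * (‖∑ ρ, a ρ • x (i ρ)‖ + (∑ ρ, ‖a ρ‖) * δ) := by
      gcongr
      exact norm_sum_units_zsmul_mul_norm_le hf a hfs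
    _ ≤ 2 * (ε + δ) := by
      rw [ha, one_mul]
      gcongr

theorem IndependentOn.radius_pos {m d : 𝕜} {δ : ℝ} {L : Set ℕ}
    (hind : IndependentOn (functionalsNear x m d δ) L) (hL : L.Nonempty) : 0 < δ := by
  obtain ⟨n, hn⟩ := hL
  obtain ⟨f, hf⟩ := hind {n} (by simpa using hn) 1
  exact pos_of_mem_ball (hf n (Finset.mem_singleton_self n))

/-- The radius `(‖d‖ - 2 * ε) / 3` makes the bound `‖d‖ ≤ 2 * (ε + δ)` for independent sets
contradictory. If `‖d‖ ≤ 2 * ε`, then it is not positive and the balls are empty. -/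
theorem AdmitsL1Blocks.exists_forall_not_oscillatesOn (h : AdmitsL1Blocks 𝕜 x ε)
    (c : ℕ → 𝕜 × 𝕜) :
    ∃ M : Set ℕ, M.Infinite ∧ ∀ k f,
      ¬ OscillatesOn (functionalsNear x (c k).1 (c k).2 ((‖(c k).2‖ - 2 * ε) / 3)) M f := by
  refine exists_infinite_forall_not_oscillatesOn fun k L hL hind ↦ ?_
  linarith [hind.radius_pos hL.nonempty, h.norm_le_of_independentOn hL hind]

/-- `ediam` replaces `Metric.diam`, which is `0` on unbounded sets. -/
theorem quantitative_rosenthal_complex_general (h : AdmitsL1Blocks 𝕜 x ε) :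
    ∃ n : ℕ → ℕ, StrictMono n ∧ ∀ x' : StrongDual 𝕜 X, ‖x'‖ ≤ 1 →
      ediam {z : 𝕜 | MapClusterPt z atTop fun k ↦ x' (x (n k))} ≤ ENNReal.ofReal (4 * ε) := by
  have hdense := TopologicalSpace.denseRange_denseSeq (𝕜 × 𝕜)
  obtain ⟨M, hM, hosc⟩ := h.exists_forall_not_oscillatesOn (TopologicalSpace.denseSeq (𝕜 × 𝕜))
  obtain ⟨n, hn, rfl⟩ : ∃ n : ℕ → ℕ, StrictMono n ∧ range n = M :=
    ⟨Nat.nth (· ∈ M), Nat.nth_strictMono hM, Nat.range_nth_of_infinite hM⟩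
  refine ⟨n, hn, fun x' hx' ↦ ediam_le fun z hz w hw ↦ ?_⟩
  rw [edist_dist]
  refine ENNReal.ofReal_le_ofReal (not_lt.1 fun hzw ↦ ?_)
  obtain ⟨k, hzk, hwk⟩ := exists_mem_ball_add_and_mem_ball_sub hdense hzw
  have hinf {y : 𝕜} (hy : MapClusterPt y atTop fun k ↦ x' (x (n k))) {c : 𝕜} {δ : ℝ}
      (hyc : y ∈ ball c δ) : {m ∈ range n | x' (x m) ∈ ball c δ}.Infinite :=
    infinite_mem_range_of_mapClusterPt (u := fun m ↦ x' (x m)) hn.injective hy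
      (isOpen_ball.mem_nhds hyc)
  refine hosc k ⟨x', mem_closedBall_zero_iff.2 hx'⟩ fun s ↦ ?_
  rcases Int.units_eq_one_or s with rfl | rfl
  · simpa only [functionalsNear, mem_ofPred_eq, one_smul] using hinf hz hzk
  · simpa only [functionalsNear, mem_ofPred_eq, Units.neg_smul, one_smul, ← sub_eq_add_neg]
      using hinf hw hwk

end Blocks

/-- **Quantitative version of Rosenthal's `ℓ¹`-theorem, complex case.**
If a bounded sequence in a complex Banach space admits `ε`-`ℓ¹`-blocks then it
has a subsequence such that for every normalized functional `x'` the set of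
accumulation points of `(x'(x_{n_k}))ₖ` has diameter at most `8ε/√2`. -/
theorem quantitative_rosenthal_complex {X : Type*} [NormedAddCommGroup X]
    [NormedSpace ℂ X] [CompleteSpace X]
    (x : ℕ → X) (hb : ∃ C : ℝ, ∀ n, ‖x n‖ ≤ C) {ε : ℝ} (hε : 0 < ε)
    (h : AdmitsL1Blocks ℂ x ε) :
    ∃ n : ℕ → ℕ, StrictMono n ∧
      ∀ x' : X →L[ℂ] ℂ, ‖x'‖ = 1 →
        Metric.diam {z : ℂ | MapClusterPt z atTop (fun k => x' (x (n k)))} ≤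
          8 * ε / Real.sqrt 2 := by
  obtain ⟨n, hn, hdiam⟩ := quantitative_rosenthal_complex_general h
  have hle : 4 * ε ≤ 8 * ε / √2 := by
    rw [le_div_iff₀ (by positivity)]
    nlinarith [Real.sqrt_two_lt_three_halves]
  exact ⟨n, hn, fun x' hx' ↦
    (ENNReal.toReal_le_of_le_ofReal (by positivity) (hdiam x' hx'.le)).trans hle⟩
end

section
/- Let $X$ be a real Banach space, let $(x_n)$ be a bounded sequence in $X$ admitting $\varepsilon$-$\ell^1$-blocks for some $\varepsilon > 0$, and let $\tau > 0$. Then there exist indices $i_1 < \cdots < i_r$ in $\mathbb{N}$ and real numbers $a_1,\ldots,a_r$ with $\sum_{\rho=1}^r |a_\rho| = 1$, $|\sum_{\rho=1}^r a_\rho| \leq \tau$, and $\|\sum_{\rho=1}^r a_\rho x_{i_\rho}\| \leq \varepsilon$. -/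
/-!
Deleting finitely many indices from an infinite set leaves it infinite, so there are infinitely many
blocks with pairwise disjoint supports. Their coefficient sums lie in the compact unit ball of the
scalar field, so two of them are arbitrarily close. Half the difference of two such blocks still has
`ℓ¹`-norm one, because the supports are disjoint, and its coefficient sum is close to zero.
-/

open Finsupp Set

theorem exists_ne_dist_lt_of_totallyBounded_range {ι α : Type*} [Infinite ι] [PseudoMetricSpace α]
    {u : ι → α} (hu : TotallyBounded (range u)) {δ : ℝ} (hδ : 0 < δ) :
    ∃ k l, k ≠ l ∧ dist (u k) (u l) < δ := by
  obtain ⟨t, ht, hcover⟩ := Metric.totallyBounded_iff.1 hu (δ / 2) (half_pos hδ)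
  have hcenter : ∀ k, ∃ c : t, dist (u k) c < δ / 2 := by
    simpa [range_subset_iff] using hcover
  choose c hc using hcenter
  have := ht.to_subtype
  obtain ⟨k, l, hkl, heq⟩ := Finite.exists_ne_map_eq_of_infinite c
  refine ⟨k, l, hkl, (dist_triangle_right _ _ (c k : α)).trans_lt ?_⟩
  linarith [hc k, heq ▸ hc l]

theorem sum_orderEmbOfFin {ι E : Type*} [LinearOrder ι] [AddCommMonoid E] (s : Finset ι)
    (g : ι → E) : ∑ ρ, g (s.orderEmbOfFin rfl ρ) = ∑ j ∈ s, g j := by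
  conv_rhs => rw [← s.map_orderEmbOfFin_univ rfl, Finset.sum_map]
  rfl

/-- A finitely supported coefficient family `f` is an `ε`-`ℓ¹`-block of `x` if it has `ℓ¹`-norm one
and `‖∑ f i • x i‖ ≤ ε`. Increasing indices `i₁ < ⋯ < i_r` with scalars `a₁, …, a_r` are encoded as
a single `Finsupp`, whose support plays the role of the index set. -/
structure IsL1Block (𝕜 : Type*) [NormedField 𝕜] {ι X : Type*} [SeminormedAddCommGroup X]
    [NormedSpace 𝕜 X] (x : ι → X) (ε : ℝ) (f : ι →₀ 𝕜) : Prop where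
  sum_norm : (f.sum fun _ c ↦ ‖c‖) = 1
  norm_linearCombination_le : ‖linearCombination 𝕜 x f‖ ≤ ε

namespace IsL1Block

variable {𝕜 ι X : Type*} [SeminormedAddCommGroup X] {x : ι → X} {ε : ℝ}

theorem norm_linearCombination_one_le_one [NormedField 𝕜] [NormedSpace 𝕜 X] {f : ι →₀ 𝕜}
    (hf : IsL1Block 𝕜 x ε f) : ‖linearCombination 𝕜 (1 : ι → 𝕜) f‖ ≤ 1 := by
  rw [← hf.sum_norm, linearCombination_apply]
  simpa [Finsupp.sum] using norm_sum_le f.support f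

theorem half_smul_sub [RCLike 𝕜] [NormedSpace 𝕜 X] {f g : ι →₀ 𝕜}
    (hf : IsL1Block 𝕜 x ε f) (hg : IsL1Block 𝕜 x ε g) (hfg : Disjoint f.support g.support) :
    IsL1Block 𝕜 x ε ((2⁻¹ : 𝕜) • (f - g)) where
  sum_norm := by
    have hsub : ((f - g).sum fun _ c ↦ ‖c‖) = 1 + 1 := by
      rw [sub_eq_add_neg, sum_add_index_of_disjoint (by rwa [support_neg]),
        sum_neg_index (by simp)]
      simp only [norm_neg, hf.sum_norm, hg.sum_norm]
    rw [sum_smul_index' (by simp)]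
    simp only [norm_smul, ← mul_sum, hsub]
    norm_num
  norm_linearCombination_le := calc
    ‖linearCombination 𝕜 x ((2⁻¹ : 𝕜) • (f - g))‖
      = 2⁻¹ * ‖linearCombination 𝕜 x f - linearCombination 𝕜 x g‖ := by
        simp [norm_smul]
    _ ≤ 2⁻¹ * (ε + ε) := by
        gcongr
        exact norm_sub_le_of_le hf.norm_linearCombination_le hg.norm_linearCombination_le
    _ = ε := by ring

end IsL1Block

namespace AdmitsL1Blocks

variable {𝕜 X : Type*} [RCLike 𝕜] [NormedAddCommGroup X] [NormedSpace 𝕜 X] {x : ℕ → X} {ε : ℝ}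
  {M : Set ℕ}

theorem exists_isL1Block_support_subset (h : AdmitsL1Blocks 𝕜 x ε) (hM : M.Infinite) :
    ∃ f : ℕ →₀ 𝕜, IsL1Block 𝕜 x ε f ∧ ↑f.support ⊆ M := by
  obtain ⟨r, i, a, hi, hiM, hsum, hnorm⟩ := h M hM
  refine ⟨embDomain ⟨i, hi.injective⟩ (equivFunOnFinite.symm a), ⟨?_, ?_⟩, ?_⟩
  · simpa [sum_embDomain, sum_fintype] using hsum
  · rw [linearCombination_embDomain, linearCombination_apply]
    simpa [sum_fintype] using hnorm
  · simpa [support_embDomain, Set.subset_def] using fun ρ _ ↦ hiM ρ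

theorem exists_pairwise_disjoint_isL1Block (h : AdmitsL1Blocks 𝕜 x ε) (hM : M.Infinite) :
    ∃ f : ℕ → ℕ →₀ 𝕜, (∀ k, IsL1Block 𝕜 x ε (f k) ∧ ↑(f k).support ⊆ M) ∧
      Pairwise fun k l ↦ Disjoint (f k).support (f l).support := by
  classical
  have : Std.Symm fun f g : ℕ →₀ 𝕜 ↦ Disjoint f.support g.support := ⟨fun _ _ h ↦ Disjoint.symm h⟩
  refine exists_seq_of_forall_finset_exists'
    (fun f : ℕ →₀ 𝕜 ↦ IsL1Block 𝕜 x ε f ∧ ↑f.support ⊆ M)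
    (fun f g ↦ Disjoint f.support g.support) fun s _ ↦ ?_
  obtain ⟨g, hg, hgM⟩ := h.exists_isL1Block_support_subset
    (hM.sdiff (s.biUnion Finsupp.support).finite_toSet)
  refine ⟨g, ⟨hg, hgM.trans sdiff_subset⟩, fun f hf ↦ ?_⟩
  exact Finset.disjoint_right.2 fun j hj hjf ↦ (hgM hj).2 (Finset.mem_biUnion.2 ⟨f, hf, hjf⟩)

theorem exists_isL1Block_norm_linearCombination_one_le (h : AdmitsL1Blocks 𝕜 x ε)
    (hM : M.Infinite) {τ : ℝ} (hτ : 0 < τ) :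
    ∃ f : ℕ →₀ 𝕜, IsL1Block 𝕜 x ε f ∧ ↑f.support ⊆ M ∧
      ‖linearCombination 𝕜 (1 : ℕ → 𝕜) f‖ ≤ τ := by
  obtain ⟨f, hf, hdisj⟩ := h.exists_pairwise_disjoint_isL1Block hM
  have htotBdd : TotallyBounded (range fun k ↦ linearCombination 𝕜 (1 : ℕ → 𝕜) (f k)) :=
    (isCompact_closedBall (0 : 𝕜) 1).totallyBounded.subset <| range_subset_iff.2 fun k ↦
      mem_closedBall_zero_iff.2 (hf k).1.norm_linearCombination_one_le_one
  obtain ⟨k, l, hkl, hclose⟩ := exists_ne_dist_lt_of_totallyBounded_range htotBdd hτ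
  refine ⟨(2⁻¹ : 𝕜) • (f k - f l), (hf k).1.half_smul_sub (hf l).1 (hdisj hkl), ?_, ?_⟩
  · classical
    exact (Finset.coe_subset.2 (support_smul.trans support_sub)).trans <| by
      simpa using ⟨(hf k).2, (hf l).2⟩
  · rw [dist_eq_norm] at hclose
    rw [map_smul, map_sub, norm_smul, norm_inv, RCLike.norm_ofNat]
    linarith

end AdmitsL1Blocks

theorem exists_block_with_small_sum_general {𝕜 X : Type*} [RCLike 𝕜] [NormedAddCommGroup X]
    [NormedSpace 𝕜 X] {x : ℕ → X} {ε : ℝ} (h : AdmitsL1Blocks 𝕜 x ε) {M : Set ℕ}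
    (hM : M.Infinite) {τ : ℝ} (hτ : 0 < τ) :
    ∃ (r : ℕ) (i : Fin r → ℕ) (a : Fin r → 𝕜),
      StrictMono i ∧ (∀ ρ, i ρ ∈ M) ∧ (∑ ρ, ‖a ρ‖) = 1 ∧ ‖∑ ρ, a ρ‖ ≤ τ ∧
        ‖∑ ρ, a ρ • x (i ρ)‖ ≤ ε := by
  obtain ⟨f, hf, hfM, hτf⟩ := h.exists_isL1Block_norm_linearCombination_one_le hM hτ
  let i := f.support.orderEmbOfFin rfl
  refine ⟨_, i, f ∘ i, i.strictMono, fun ρ ↦ hfM (f.support.orderEmbOfFin_mem rfl ρ), ?_, ?_, ?_⟩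
  · exact (sum_orderEmbOfFin f.support fun j ↦ ‖f j‖).trans hf.sum_norm
  · simpa [i, sum_orderEmbOfFin, linearCombination_apply, Finsupp.sum] using hτf
  · exact (congrArg norm (sum_orderEmbOfFin f.support fun j ↦ f j • x j)).trans_le
      hf.norm_linearCombination_le

/-- If a bounded sequence in a real Banach space admits `ε`-`ℓ¹`-blocks, then
for every `τ > 0` one can find an `ε`-`ℓ¹`-block whose coefficients moreover
satisfy `|∑ a_ρ| ≤ τ`. -/
theorem exists_block_with_small_sum {X : Type*} [NormedAddCommGroup X]
    [NormedSpace ℝ X] [CompleteSpace X]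
    (x : ℕ → X) (hb : ∃ C : ℝ, ∀ n, ‖x n‖ ≤ C) {ε : ℝ} (hε : 0 < ε)
    (h : AdmitsL1Blocks ℝ x ε) {τ : ℝ} (hτ : 0 < τ) :
    ∃ (r : ℕ) (i : Fin r → ℕ) (a : Fin r → ℝ),
      StrictMono i ∧ (∑ ρ, |a ρ|) = 1 ∧ |∑ ρ, a ρ| ≤ τ ∧
        ‖∑ ρ, a ρ • x (i ρ)‖ ≤ ε := by
  obtain ⟨r, i, a, hi, -, hblock⟩ := exists_block_with_small_sum_general h infinite_univ hτ
  exact ⟨r, i, a, hi, hblock⟩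
end

section
/- Let $X$ be a real Banach space, $(x_n)$ a bounded sequence in $X$, $\varepsilon > 0$ and $\delta > 0$, and suppose that every subsequence $(x_{n_k})$ of $(x_n)$ satisfies $\sup_{\|x'\|=1}\bigl(\limsup_k x'(x_{n_k}) - \liminf_k x'(x_{n_k})\bigr) > 2\varepsilon + \delta$. Then there is a subsequence $(x_{m_j})$ of $(x_n)$ with the following property: whenever $C$ and $D$ are finite disjoint subsets of $\mathbb{N}$, there exist $\lambda_0 \in \mathbb{R}$ and $x' \in X'$ with $\|x'\| = 1$ such that $x'(x_{m_j}) < \lambda_0$ for all $j \in C$ and $x'(x_{m_j}) > \lambda_0 + 2\varepsilon + \delta$ for all $j \in D$. -/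
open Filter

/-!
Pairing each functional with each candidate threshold `lam` turns the problem into one about a
sequence of pairs of sets: the `n`-th pair consists of the `(x', lam)` with `x' (x n) < lam` and of
those with `x' (x n) > lam + 2 * ε + δ`. By hypothesis every infinite set of indices is split by
some `(x', lam)`, which lies infinitely often on either side, and an independent subsequence is
wanted.

It is built one index at a time, maintaining a finite family of sets of points (one for each
pattern of sides prescribed so far), each of which still contains a splitter for every infinite
subset of the remaining indices. If no next index preserved this, the failures would produce
indices `m 0 < m 1 < ⋯`, each failing for one set of the family and one side; by the pigeonhole
principle, infinitely many of them fail for the same set `J` and the same side. A point of `J`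
splitting these indices lies on the given side of some `m k` and splits the later ones,
contradicting the failure at `m k`.
-/

section Fusion

variable {α : Type*} {p : α → Prop} {carrier : α → Set ℕ} {r : α → ℕ → α → Prop}

theorem exists_fusion_sequence {a₀ : α} (h₀ : p a₀)
    (hstep : ∀ a, p a → ∃ n ∈ carrier a, ∃ b, p b ∧
      carrier b ⊆ carrier a ∩ Set.Ioi n ∧ r a n b) :
    ∃ (a : ℕ → α) (m : ℕ → ℕ), a 0 = a₀ ∧ StrictMono m ∧ (∀ k, p (a k)) ∧
      (∀ j k, j ≤ k → m k ∈ carrier (a j)) ∧ ∀ k, r (a k) (m k) (a (k + 1)) := by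
  have : Nonempty α := ⟨a₀⟩
  choose! n hn next hp hsub hr using hstep
  let a : ℕ → α := fun k => next^[k] a₀
  have ha_succ : ∀ k, a (k + 1) = next (a k) := fun k => Function.iterate_succ_apply' next k a₀
  have hpa : ∀ k, p (a k) := by
    intro k
    induction k with
    | zero => exact h₀
    | succ k ih => exact ha_succ k ▸ hp _ ih
  have hcarrier : ∀ k, carrier (a (k + 1)) ⊆ carrier (a k) ∩ Set.Ioi (n (a k)) := fun k =>
    ha_succ k ▸ hsub _ (hpa k)
  have hanti : Antitone fun k => carrier (a k) :=
    antitone_nat_of_succ_le fun k => (hcarrier k).trans Set.inter_subset_left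
  refine ⟨a, fun k => n (a k), rfl, strictMono_nat_of_lt_succ fun k => ?_, hpa,
    fun j k hjk => hanti hjk (hn _ (hpa k)), fun k => ha_succ k ▸ hr _ (hpa k)⟩
  exact (hcarrier k (hn _ (hpa (k + 1)))).2

end Fusion

section Independence

variable {ι κ : Type*} {A : ℕ → κ → Set ι} {i : ι} {J : Set ι} {L M : Set ℕ}
  {F : Set (Set ι)} {m : ℕ → ℕ}

/-- A sequence of indexed families `A n` of sets is independent if any finitely many sets with
distinct indices `n`, one from each of the corresponding families, have a common point. For
`κ = Bool` this is Rosenthal's notion of an independent sequence of pairs of sets. -/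
def IsIndependentSeq (A : ℕ → κ → Set ι) : Prop :=
  ∀ (T : Finset ℕ) (c : ℕ → κ), (⋂ n ∈ T, A n (c n)).Nonempty

/-- The point `i` splits the index set `L` if for every `c` it belongs to `A n c` for infinitely
many `n ∈ L`; for `κ = Bool` it witnesses that the pairs `A n`, `n ∈ L`, do not converge in
Rosenthal's sense. -/
def Splits (A : ℕ → κ → Set ι) (i : ι) (L : Set ℕ) : Prop :=
  ∀ c, {n ∈ L | i ∈ A n c}.Infinite

/-- Every infinite subset of `M` is split by a point of `J`: the invariant that keeps the
construction of an independent subsequence going. -/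
def SplitsSubsets (A : ℕ → κ → Set ι) (J : Set ι) (M : Set ℕ) : Prop :=
  ∀ L ⊆ M, L.Infinite → ∃ i ∈ J, Splits A i L

/-- The traces of the members of `F` on the sets of the `n`-th family. Iterated from `{Set.univ}`,
it yields the intersections of one set from each of the families selected so far. -/
def refineAt (A : ℕ → κ → Set ι) (F : Set (Set ι)) (n : ℕ) : Set (Set ι) :=
  Set.image2 (fun J c => J ∩ A n c) F Set.univ

theorem Splits.of_finite_sdiff (h : Splits A i L) (hLM : (L \ M).Finite) : Splits A i M :=
  fun c => ((h c).sdiff hLM).mono fun _ hn =>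
    ⟨by_contra fun hM => hn.2 ⟨hn.1.1, hM⟩, hn.1.2⟩

theorem Splits.mono (h : Splits A i L) (hLM : L ⊆ M) : Splits A i M :=
  h.of_finite_sdiff (by simp [Set.sdiff_eq_empty.2 hLM])

theorem splits_range_of_frequently (hm : m.Injective)
    (h : ∀ c, ∃ᶠ k in atTop, i ∈ A (m k) c) : Splits A i (Set.range m) := by
  intro c
  refine ((Nat.frequently_atTop_iff_infinite.1 (h c)).image hm.injOn).mono ?_
  rintro _ ⟨k, hk, rfl⟩
  exact ⟨⟨k, rfl⟩, hk⟩

theorem splitsSubsets_univ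
    (h : ∀ n : ℕ → ℕ, StrictMono n → ∃ i, ∀ c, ∃ᶠ k in atTop, i ∈ A (n k) c) :
    SplitsSubsets A Set.univ Set.univ := by
  intro L _ hL
  have hnth : StrictMono (Nat.nth (· ∈ L)) := Nat.nth_strictMono hL
  have hrange : Set.range (Nat.nth (· ∈ L)) = L := Nat.range_nth_of_infinite hL
  obtain ⟨i, hi⟩ := h _ hnth
  exact ⟨i, trivial, hrange ▸ splits_range_of_frequently hnth.injective hi⟩

theorem SplitsSubsets.mono (h : SplitsSubsets A J M) (hLM : L ⊆ M) : SplitsSubsets A J L :=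
  fun _ hL => h _ (hL.trans hLM)

theorem SplitsSubsets.nonempty (h : SplitsSubsets A J M) (hM : M.Infinite) : J.Nonempty :=
  let ⟨i, hi, _⟩ := h M subset_rfl hM
  ⟨i, hi⟩

theorem exists_mem_splits_image_Ioi [Finite κ] (hF : F.Finite) (hm : m.Injective)
    (hsplit : ∀ J ∈ F, SplitsSubsets A J (Set.range m)) {J : ℕ → Set ι} (hJ : ∀ k, J k ∈ F)
    (c : ℕ → κ) : ∃ k, ∃ i ∈ J k ∩ A (m k) (c k), Splits A i (m '' Set.Ioi k) := by
  have : Finite F := hF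
  obtain ⟨⟨J₀, c₀⟩, hfiber⟩ :=
    Finite.exists_infinite_fiber fun k => ((⟨J k, hJ k⟩, c k) : F × κ)
  set K : Set ℕ := (fun k => ((⟨J k, hJ k⟩, c k) : F × κ)) ⁻¹' {(J₀, c₀)}
  have hK : (m '' K).Infinite := (Set.infinite_coe_iff.1 hfiber).image hm.injOn
  obtain ⟨i, hiJ, hi⟩ := hsplit J₀ J₀.2 (m '' K) (Set.image_subset_range m K) hK
  obtain ⟨_, ⟨k, hk, rfl⟩, hik⟩ := (hi c₀).nonempty
  obtain ⟨rfl, rfl⟩ := Prod.mk.inj hk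
  refine ⟨k, i, ⟨hiJ, hik⟩, hi.of_finite_sdiff (((Set.finite_Iic k).image m).subset ?_)⟩
  rintro _ ⟨⟨j, _, rfl⟩, hj⟩
  exact ⟨j, Set.mem_Iic.2 (not_lt.1 fun hkj => hj ⟨j, hkj, rfl⟩), rfl⟩

theorem exists_splitsSubsets_refineAt [Finite κ] (hF : F.Finite) (hM : M.Infinite)
    (hsplit : ∀ J ∈ F, SplitsSubsets A J M) :
    ∃ n ∈ M, ∃ M' ⊆ M ∩ Set.Ioi n, M'.Infinite ∧
      ∀ J ∈ refineAt A F n, SplitsSubsets A J M' := by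
  by_contra! hfail
  have hstep : ∀ P : Set ℕ, P ⊆ M ∧ P.Infinite → ∃ n ∈ P, ∃ Q, (Q ⊆ M ∧ Q.Infinite) ∧
      Q ⊆ P ∩ Set.Ioi n ∧ ∃ J ∈ F, ∃ c, ∀ i ∈ J ∩ A n c, ¬ Splits A i Q := by
    rintro P ⟨hPM, hP⟩
    obtain ⟨n, hn⟩ := hP.nonempty
    have htail : (P ∩ Set.Ioi n).Infinite := by
      simpa only [Set.sdiff_eq, Set.compl_Iic] using hP.sdiff (Set.finite_Iic n)
    obtain ⟨_, ⟨J, hJ, c, -, rfl⟩, hnot⟩ :=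
      hfail n (hPM hn) _ (Set.inter_subset_inter_left _ hPM) htail
    unfold SplitsSubsets at hnot
    push Not at hnot
    obtain ⟨Q, hQ, hQinf, hQsplit⟩ := hnot
    exact ⟨n, hn, Q, ⟨hQ.trans (Set.inter_subset_left.trans hPM), hQinf⟩, hQ, J, hJ, c, hQsplit⟩
  obtain ⟨P, m, hP₀, hm, -, hmem, hbad⟩ :=
    exists_fusion_sequence (carrier := id) ⟨subset_rfl, hM⟩ hstep
  choose J hJ c hJc using hbad
  have hrange : Set.range m ⊆ M := by
    rintro _ ⟨k, rfl⟩
    exact hP₀ ▸ hmem 0 k k.zero_le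
  obtain ⟨k, i, hi, hsplits⟩ :=
    exists_mem_splits_image_Ioi hF hm.injective (fun J hJ => (hsplit J hJ).mono hrange) hJ c
  refine hJc k i hi (hsplits.mono ?_)
  rintro _ ⟨j, hj, rfl⟩
  exact hmem (k + 1) j hj

theorem biInter_mem_of_refineAt {F : ℕ → Set (Set ι)} (h₀ : F 0 = {Set.univ})
    (hF : ∀ k, F (k + 1) = refineAt A (F k) (m k)) (c : ℕ → κ) (k : ℕ) :
    ⋂ j < k, A (m j) (c j) ∈ F k := by
  induction k with
  | zero => simp [h₀]
  | succ k ih =>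
    rw [Set.biInter_lt_succ, hF]
    exact Set.mem_image2_of_mem ih trivial

theorem exists_strictMono_isIndependentSeq [Finite κ]
    (h : ∀ n : ℕ → ℕ, StrictMono n → ∃ i, ∀ c, ∃ᶠ k in atTop, i ∈ A (n k) c) :
    ∃ m : ℕ → ℕ, StrictMono m ∧ IsIndependentSeq fun k => A (m k) := by
  obtain ⟨a, m, ha₀, hm, hinv, -, hrefine⟩ := exists_fusion_sequence
    (p := fun a : Set (Set ι) × Set ℕ =>
      a.1.Finite ∧ a.2.Infinite ∧ ∀ J ∈ a.1, SplitsSubsets A J a.2)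
    (carrier := Prod.snd) (r := fun a n b => b.1 = refineAt A a.1 n)
    (a₀ := ({Set.univ}, Set.univ))
    ⟨Set.finite_singleton _, Set.infinite_univ, fun _ hJ => hJ ▸ splitsSubsets_univ h⟩
    (by
      rintro ⟨F, M⟩ ⟨hF, hM, hsplit⟩
      obtain ⟨n, hn, M', hM'M, hM', hsplit'⟩ := exists_splitsSubsets_refineAt hF hM hsplit
      exact ⟨n, hn, (refineAt A F n, M'), ⟨hF.image2 _ Set.finite_univ, hM', hsplit'⟩, hM'M, rfl⟩)
  refine ⟨m, hm, fun T c => ?_⟩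
  obtain ⟨N, hN⟩ := T.exists_nat_subset_range
  obtain ⟨-, hinf, hsplit⟩ := hinv N
  have hmem := biInter_mem_of_refineAt (F := fun k => (a k).1) (by rw [ha₀]) hrefine c N
  exact ((hsplit _ hmem).nonempty hinf).mono
    (Set.biInter_subset_biInter_left fun j hj => Finset.mem_range.1 (hN hj))

theorem IsIndependentSeq.exists_mem_of_disjoint {A : ℕ → Bool → Set ι} (hA : IsIndependentSeq A)
    {C D : Finset ℕ} (hCD : Disjoint C D) :
    ∃ i, (∀ j ∈ C, i ∈ A j false) ∧ ∀ j ∈ D, i ∈ A j true := by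
  obtain ⟨i, hi⟩ := hA (C ∪ D) fun j => decide (j ∈ D)
  rw [Set.mem_iInter₂] at hi
  refine ⟨i, fun j hj => ?_, fun j hj => ?_⟩
  · simpa [Finset.disjoint_left.1 hCD hj] using hi j (Finset.mem_union_left D hj)
  · simpa [hj] using hi j (Finset.mem_union_right C hj)

end Independence

section Oscillation

theorem exists_frequently_lt_and_frequently_add_lt {α : Type*} {l : Filter α} {u : α → ℝ}
    (hge : l.IsCoboundedUnder (· ≥ ·) u) (hle : l.IsCoboundedUnder (· ≤ ·) u) {c : ℝ}
    (h : c < limsup u l - liminf u l) :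
    ∃ lam, (∃ᶠ a in l, u a < lam) ∧ ∃ᶠ a in l, lam + c < u a := by
  obtain ⟨lam, hlow, hhigh⟩ : ∃ lam, liminf u l < lam ∧ lam < limsup u l - c :=
    exists_between (by linarith)
  exact ⟨lam, frequently_lt_of_liminf_lt hge hlow,
    frequently_lt_of_lt_limsup hle (lt_sub_iff_add_lt.1 hhigh)⟩

variable {ι : Type*}

/-- The pair of sets attached to the `n`-th terms of the sequences `f i`. Its points are the
pairs `(i, lam)`, so that the threshold may depend on the sequence; the side `false` means below
`lam`, and the side `true` above `lam + c`. -/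
def thresholdPair (f : ι → ℕ → ℝ) (c : ℝ) (n : ℕ) : Bool → Set (ι × ℝ)
  | false => {q | f q.1 n < q.2}
  | true => {q | q.2 + c < f q.1 n}

theorem separation_subsequence_general {f : ι → ℕ → ℝ} {c : ℝ}
    (hf : ∀ i, Bornology.IsBounded (Set.range (f i)))
    (h : ∀ n : ℕ → ℕ, StrictMono n → ∃ i,
      c < limsup (fun k => f i (n k)) atTop - liminf (fun k => f i (n k)) atTop) :
    ∃ m : ℕ → ℕ, StrictMono m ∧ ∀ C D : Finset ℕ, Disjoint C D →
      ∃ (i : ι) (lam : ℝ), (∀ j ∈ C, f i (m j) < lam) ∧ ∀ j ∈ D, lam + c < f i (m j) := by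
  have hsplit : ∀ n : ℕ → ℕ, StrictMono n →
      ∃ q, ∀ b, ∃ᶠ k in atTop, q ∈ thresholdPair f c (n k) b := by
    intro n hn
    obtain ⟨i, hi⟩ := h n hn
    have hbdd := (hf i).subset (Set.range_comp_subset_range n (f i))
    obtain ⟨lam, hlow, hhigh⟩ := exists_frequently_lt_and_frequently_add_lt
      hbdd.bddAbove.isBoundedUnder_of_range.isCoboundedUnder_ge
      hbdd.bddBelow.isBoundedUnder_of_range.isCoboundedUnder_le hi
    exact ⟨(i, lam), Bool.forall_bool.2 ⟨hlow, hhigh⟩⟩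
  obtain ⟨m, hm, hind⟩ := exists_strictMono_isIndependentSeq (A := thresholdPair f c) hsplit
  refine ⟨m, hm, fun C D hCD => ?_⟩
  obtain ⟨⟨i, lam⟩, hC, hD⟩ := hind.exists_mem_of_disjoint hCD
  exact ⟨i, lam, hC, hD⟩

end Oscillation

/-- If every subsequence `(x_{n_k})` of a bounded sequence `(xₙ)` in a real
Banach space admits a normalized functional `x'` with
`limsup x'(x_{n_k}) - liminf x'(x_{n_k}) > 2ε + δ`, then there is a subsequence
`(x_{m_j})` such that any two finite disjoint sets `C, D` of indices can be
separated: for some `λ₀` and some normalized `x'` one has `x'(x_{m_j}) < λ₀`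
on `C` and `x'(x_{m_j}) > λ₀ + 2ε + δ` on `D`. -/
theorem separation_subsequence {X : Type*} [NormedAddCommGroup X]
    [NormedSpace ℝ X] [CompleteSpace X]
    (x : ℕ → X) (hb : ∃ C : ℝ, ∀ n, ‖x n‖ ≤ C) {ε δ : ℝ} (hε : 0 < ε) (hδ : 0 < δ)
    (h : ∀ n : ℕ → ℕ, StrictMono n →
      ∃ x' : X →L[ℝ] ℝ, ‖x'‖ = 1 ∧
        limsup (fun k => x' (x (n k))) atTop -
          liminf (fun k => x' (x (n k))) atTop > 2 * ε + δ) :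
    ∃ m : ℕ → ℕ, StrictMono m ∧
      ∀ C D : Finset ℕ, Disjoint C D →
        ∃ (lam : ℝ) (x' : X →L[ℝ] ℝ), ‖x'‖ = 1 ∧
          (∀ j ∈ C, x' (x (m j)) < lam) ∧
          (∀ j ∈ D, x' (x (m j)) > lam + 2 * ε + δ) := by
  obtain ⟨B, hB⟩ := hb
  obtain ⟨m, hm, hsep⟩ := separation_subsequence_general
    (f := fun (x' : {x' : X →L[ℝ] ℝ // ‖x'‖ = 1}) n => x'.1 (x n)) (c := 2 * ε + δ)
    (fun x' => isBounded_iff_forall_norm_le.2 ⟨1 * B, Set.forall_mem_range.2 fun n =>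
      x'.1.le_of_opNorm_le_of_le x'.2.le (hB n)⟩)
    (fun n hn => let ⟨x', hx', hosc⟩ := h n hn; ⟨⟨x', hx'⟩, hosc⟩)
  refine ⟨m, hm, fun C D hCD => ?_⟩
  obtain ⟨⟨x', hx'⟩, lam, hC, hD⟩ := hsep C D hCD
  exact ⟨lam, x', hx', hC, by simpa only [add_assoc] using hD⟩
end

section
/- Let $X$ be a real or complex Banach space and $(x_n)$ a bounded sequence in $X$. Suppose there is an $r \in \mathbb{N}$ with the following property: whenever $M \subseteq \mathbb{N}$ is infinite and $\varepsilon > 0$, there are $i_1 < \cdots < i_r$ in $M$ and scalars $a_1,\ldots,a_r$ with $\sum_{\rho=1}^r |a_\rho| = 1$ such that $\|\sum_{\rho=1}^r a_\rho x_{i_\rho}\| \leq \varepsilon$. Then $(x_n)$ has a norm-convergent subsequence. -/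
open Filter

/-!
If `range x` is bounded but not totally bounded, then for some `δ > 0` no finite-dimensional
subspace comes within `δ` of every `x n`, so one can choose inductively a subsequence each of whose
terms is at distance at least `δ` from the span of the earlier ones. For bounded families with this
separation property, `∑ ‖a ρ‖` is controlled by `‖∑ a ρ • v ρ‖`, with a constant depending only on
`δ`, the bound and the number of terms. Hence the normalized blocks of length `r` of that
subsequence are bounded away from `0`.
-/

open Bornology Metric Set

section TotallyBounded

variable {𝕜 X : Type*} [NontriviallyNormedField 𝕜] [LocallyCompactSpace 𝕜]
  [NormedAddCommGroup X] [NormedSpace 𝕜 X] {s : Set X}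

theorem totallyBounded_of_isBounded_of_subset_finiteDimensional (F : Submodule 𝕜 X)
    [FiniteDimensional 𝕜 F] (hs : IsBounded s) (hsF : s ⊆ F) : TotallyBounded s := by
  have : ProperSpace F := FiniteDimensional.proper 𝕜 F
  have hbdd : IsBounded ((↑) ⁻¹' s : Set F) :=
    isometry_subtype_coe.antilipschitz.isBounded_preimage hs
  have himage : ((↑) '' ((↑) ⁻¹' s : Set F) : Set X) = s := by
    rw [image_preimage_eq_inter_range, Subtype.range_coe, inter_eq_left.2 hsF]
  rw [← himage]
  exact (hbdd.isCompact_closure.totallyBounded.subset subset_closure).image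
    uniformContinuous_subtype_val

theorem totallyBounded_of_forall_subset_thickening_finiteDimensional (hs : IsBounded s)
    (h : ∀ ε > 0, ∃ F : Submodule 𝕜 X, FiniteDimensional 𝕜 F ∧ s ⊆ thickening ε (F : Set X)) :
    TotallyBounded s := by
  refine totallyBounded_iff.2 fun ε hε => ?_
  obtain ⟨F, hF, hsF⟩ := h (ε / 2) (half_pos hε)
  have hT : TotallyBounded ((F : Set X) ∩ thickening (ε / 2) s) :=
    totallyBounded_of_isBounded_of_subset_finiteDimensional F
      (hs.thickening.subset inter_subset_right) inter_subset_left
  obtain ⟨t, ht, hcover⟩ := totallyBounded_iff.1 hT (ε / 2) (half_pos hε)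
  refine ⟨t, ht, fun x hx => ?_⟩
  obtain ⟨y, hyF, hxy⟩ := mem_thickening_iff.1 (hsF hx)
  have hy : y ∈ thickening (ε / 2) s := mem_thickening_iff.2 ⟨x, hx, by rwa [dist_comm]⟩
  obtain ⟨z, hz, hyz⟩ := mem_iUnion₂.1 (hcover ⟨hyF, hy⟩)
  refine mem_iUnion₂.2 ⟨z, hz, ?_⟩
  calc dist x z ≤ dist x y + dist y z := dist_triangle x y z
    _ < ε / 2 + ε / 2 := add_lt_add hxy hyz
    _ = ε := add_halves ε

variable (𝕜) in
theorem exists_forall_finiteDimensional_le_infDist (hs : IsBounded s) (hs' : ¬TotallyBounded s) :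
    ∃ δ > 0, ∀ F : Submodule 𝕜 X, FiniteDimensional 𝕜 F → ∃ x ∈ s, δ ≤ infDist x F := by
  contrapose! hs'
  refine totallyBounded_of_forall_subset_thickening_finiteDimensional (𝕜 := 𝕜) hs fun ε hε => ?_
  obtain ⟨F, hF, hlt⟩ := hs' ε hε
  exact ⟨F, hF, fun x hx => mem_thickening_iff.2 ((infDist_lt_iff F.nonempty).1 (hlt x hx))⟩

end TotallyBounded

section SpanSeparated

variable {𝕜 X ι κ : Type*} [NormedField 𝕜] [SeminormedAddCommGroup X] [NormedSpace 𝕜 X]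
  [Preorder ι] [Preorder κ] {δ C : ℝ}

variable (𝕜) in
/-- A family is `δ`-span-separated if each member is at distance at least `δ` from the linear span
of the members with strictly smaller index. This makes the coefficients of a linear combination
recoverable, starting from the last one, with a loss depending only on `δ` and the norms. -/
def IsSpanSeparated (δ : ℝ) (v : ι → X) : Prop :=
  ∀ i, δ ≤ infDist (v i) (Submodule.span 𝕜 (v '' Iio i))

theorem infDist_span_anti {s t : Set X} (hst : s ⊆ t) (x : X) :
    infDist x (Submodule.span 𝕜 t) ≤ infDist x (Submodule.span 𝕜 s) :=
  infDist_le_infDist_of_subset (Submodule.span_mono hst) (Submodule.nonempty _)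

theorem IsSpanSeparated.comp_strictMono {v : ι → X} (hv : IsSpanSeparated 𝕜 δ v) {φ : κ → ι}
    (hφ : StrictMono φ) : IsSpanSeparated 𝕜 δ (v ∘ φ) := fun k => by
  have hsub : (v ∘ φ) '' Iio k ⊆ v '' Iio (φ k) := by
    rw [image_comp]
    exact image_mono hφ.mapsTo_Iio.image_subset
  exact (hv (φ k)).trans (infDist_span_anti hsub _)

theorem norm_mul_infDist_le_norm_add_smul {F : Submodule 𝕜 X} {u : X} (hu : u ∈ F) (b : 𝕜)
    (w : X) : ‖b‖ * infDist w F ≤ ‖u + b • w‖ := by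
  rcases eq_or_ne b 0 with rfl | hb
  · simp
  · have hmem : -(b⁻¹ • u) ∈ F := F.neg_mem (F.smul_mem _ hu)
    calc ‖b‖ * infDist w F ≤ ‖b‖ * dist w (-(b⁻¹ • u)) := by
          gcongr
          exact infDist_le_dist_of_mem hmem
      _ = ‖u + b • w‖ := by
          rw [dist_eq_norm, ← norm_smul, sub_neg_eq_add, smul_add, smul_inv_smul₀ hb, add_comm]

theorem exists_sum_norm_le_mul_norm_sum (hδ : 0 < δ) (hC : 0 ≤ C) (r : ℕ) :
    ∃ K > 0, ∀ v : Fin r → X, (∀ ρ, ‖v ρ‖ ≤ C) → IsSpanSeparated 𝕜 δ v →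
      ∀ a : Fin r → 𝕜, ∑ ρ, ‖a ρ‖ ≤ K * ‖∑ ρ, a ρ • v ρ‖ := by
  induction r with
  | zero => exact ⟨1, one_pos, fun v _ _ a => by simp⟩
  | succ r ih =>
    obtain ⟨K, hK, ih⟩ := ih
    refine ⟨K * (1 + C / δ) + 1 / δ, by positivity, fun v hvC hv a => ?_⟩
    have hinit := ih (v ∘ Fin.castSucc) (fun ρ => hvC _)
      (hv.comp_strictMono Fin.strictMono_castSucc) (a ∘ Fin.castSucc)
    simp only [Function.comp_apply] at hinit
    rw [Fin.sum_univ_castSucc, Fin.sum_univ_castSucc]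
    set u := ∑ ρ : Fin r, a ρ.castSucc • v ρ.castSucc
    set b := a (Fin.last r)
    set w := v (Fin.last r)
    have hu : u ∈ Submodule.span 𝕜 (v '' Iio (Fin.last r)) :=
      Submodule.sum_mem _ fun ρ _ => Submodule.smul_mem _ _
        (Submodule.subset_span (mem_image_of_mem v (Fin.castSucc_lt_last ρ)))
    have hlast : ‖b‖ ≤ ‖u + b • w‖ / δ := (le_div_iff₀ hδ).2 <|
      (mul_le_mul_of_nonneg_left (hv _) (norm_nonneg b)).trans
        (norm_mul_infDist_le_norm_add_smul hu b w)
    have hu_norm : ‖u‖ ≤ (1 + C / δ) * ‖u + b • w‖ :=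
      calc ‖u‖ ≤ ‖u + b • w‖ + ‖b • w‖ := norm_le_add_norm_add u (b • w)
        _ ≤ ‖u + b • w‖ + ‖u + b • w‖ / δ * C := by
            rw [norm_smul]
            gcongr
            exact hvC _
        _ = (1 + C / δ) * ‖u + b • w‖ := by ring
    calc ∑ ρ : Fin r, ‖a ρ.castSucc‖ + ‖b‖
        ≤ K * ((1 + C / δ) * ‖u + b • w‖) + ‖u + b • w‖ / δ :=
          add_le_add (hinit.trans (by gcongr)) hlast
      _ = (K * (1 + C / δ) + 1 / δ) * ‖u + b • w‖ := by ring

theorem exists_strictMono_isSpanSeparated_comp {x : ℕ → X} (hδ : 0 < δ)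
    (h : ∀ F : Submodule 𝕜 X, FiniteDimensional 𝕜 F → ∃ n, δ ≤ infDist (x n) F) :
    ∃ φ : ℕ → ℕ, StrictMono φ ∧ IsSpanSeparated 𝕜 δ (x ∘ φ) := by
  have hnext (m : ℕ) : ∃ n > m, δ ≤ infDist (x n) (Submodule.span 𝕜 (x '' Iic m)) := by
    obtain ⟨n, hn⟩ := h _ (FiniteDimensional.span_of_finite 𝕜 ((finite_Iic m).image x))
    refine ⟨n, lt_of_not_ge fun hnm => hδ.not_ge ?_, hn⟩
    exact hn.trans_eq (infDist_zero_of_mem (Submodule.subset_span (mem_image_of_mem x hnm)))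
  choose next hlt hfar using hnext
  have hmono : StrictMono fun k => next^[k] 0 := strictMono_nat_of_lt_succ fun k => by
    rw [Function.iterate_succ_apply']
    exact hlt _
  refine ⟨fun k => next^[k + 1] 0, fun _ _ hjk => hmono (Nat.succ_lt_succ hjk), fun k => ?_⟩
  have hsub : (x ∘ fun k => next^[k + 1] 0) '' Iio k ⊆ x '' Iic (next^[k] 0) := by
    rintro _ ⟨j, hjk, rfl⟩
    exact mem_image_of_mem x (hmono.monotone (Nat.succ_le_of_lt hjk))
  refine le_trans ?_ (infDist_span_anti hsub _)
  rw [Function.comp_apply, Function.iterate_succ_apply']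
  exact hfar _

end SpanSeparated

theorem convergent_subsequence_of_uniform_blocks_general {𝕜 X : Type*} [NontriviallyNormedField 𝕜]
    [LocallyCompactSpace 𝕜] [NormedAddCommGroup X] [NormedSpace 𝕜 X]
    (x : ℕ → X) (hb : ∃ C : ℝ, ∀ n, ‖x n‖ ≤ C) (r : ℕ)
    (h : ∀ M : Set ℕ, M.Infinite → ∀ ε : ℝ, 0 < ε →
      ∃ (i : Fin r → ℕ) (a : Fin r → 𝕜),
        StrictMono i ∧ (∀ ρ, i ρ ∈ M) ∧ (∑ ρ, ‖a ρ‖) = 1 ∧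
          ‖∑ ρ, a ρ • x (i ρ)‖ ≤ ε) :
    TotallyBounded (range x) := by
  obtain ⟨C, hC⟩ := hb
  have hbdd : IsBounded (range x) := isBounded_iff_forall_norm_le.2 ⟨C, forall_mem_range.2 hC⟩
  by_contra hntb
  obtain ⟨δ, hδ, hfar⟩ := exists_forall_finiteDimensional_le_infDist 𝕜 hbdd hntb
  simp only [exists_range_iff] at hfar
  obtain ⟨φ, hφ, hsep⟩ := exists_strictMono_isSpanSeparated_comp hδ hfar
  obtain ⟨K, hK, hcoeff⟩ := exists_sum_norm_le_mul_norm_sum (𝕜 := 𝕜) (X := X) hδ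
    ((norm_nonneg _).trans (hC 0)) r
  obtain ⟨i, a, hi, hiφ, ha, hsmall⟩ :=
    h (range φ) (infinite_range_of_injective hφ.injective) (1 / (2 * K)) (by positivity)
  choose j hj using hiφ
  obtain rfl : φ ∘ j = i := funext hj
  have hjmono : StrictMono j := fun _ _ hlt => hφ.lt_iff_lt.1 (hi hlt)
  have : (1 : ℝ) ≤ 1 / 2 :=
    calc 1 = ∑ ρ, ‖a ρ‖ := ha.symm
      _ ≤ K * ‖∑ ρ, a ρ • x (φ (j ρ))‖ :=
          hcoeff _ (fun _ => hC _) (hsep.comp_strictMono hjmono) a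
      _ ≤ K * (1 / (2 * K)) := mul_le_mul_of_nonneg_left hsmall hK.le
      _ = 1 / 2 := by field_simp
  norm_num at this

/-- **Blockings with uniformly bounded length.** If there is a fixed `r` such
that every infinite `M ⊆ ℕ` contains, for every `ε > 0`, indices
`i₁ < ⋯ < i_r` and scalars `a₁,…,a_r` with `∑ |a_ρ| = 1` and
`‖∑ a_ρ x_{i_ρ}‖ ≤ ε`, then the bounded sequence `(xₙ)` has a norm-convergent
subsequence. -/
theorem convergent_subsequence_of_uniform_blocks {𝕜 : Type*} [RCLike 𝕜]
    {X : Type*} [NormedAddCommGroup X] [NormedSpace 𝕜 X] [CompleteSpace X]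
    (x : ℕ → X) (hb : ∃ C : ℝ, ∀ n, ‖x n‖ ≤ C) (r : ℕ)
    (h : ∀ M : Set ℕ, M.Infinite → ∀ ε : ℝ, 0 < ε →
      ∃ (i : Fin r → ℕ) (a : Fin r → 𝕜),
        StrictMono i ∧ (∀ ρ, i ρ ∈ M) ∧ (∑ ρ, ‖a ρ‖) = 1 ∧
          ‖∑ ρ, a ρ • x (i ρ)‖ ≤ ε) :
    ∃ (n : ℕ → ℕ) (l : X), StrictMono n ∧
      Tendsto (fun k => x (n k)) atTop (nhds l) := by
  obtain ⟨l, -, n, hn, hl⟩ := (convergent_subsequence_of_uniform_blocks_general x hb r h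
    |>.closure.isCompact_of_isClosed isClosed_closure).tendsto_subseq
      fun k => subset_closure (mem_range_self k)
  exact ⟨n, l, hn, hl⟩
end

section
/- For $\ell = 0,1,2,\ldots$ and $\varepsilon_1,\ldots,\varepsilon_\ell \in \{0,1\}$ let $r_{\varepsilon_1\ldots\varepsilon_\ell}$ be real (or complex) numbers such that $|r_{\varepsilon_1\ldots\varepsilon_\ell}| \leq 2^{-\ell}$ and $r_{\varepsilon_1\ldots\varepsilon_\ell} = r_{\varepsilon_1\ldots\varepsilon_\ell 0} + r_{\varepsilon_1\ldots\varepsilon_\ell 1}$ for all $\ell$ and all $\varepsilon_1,\ldots,\varepsilon_\ell$. Define $\eta_\ell := \sum_{\varepsilon_1,\ldots,\varepsilon_\ell \in \{0,1\}} (r_{\varepsilon_1\ldots\varepsilon_\ell 0} - r_{\varepsilon_1\ldots\varepsilon_\ell 1})$. Then $\sum_\ell |\eta_\ell|^2 \leq 1$; in particular $\eta_\ell \to 0$. -/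
open Filter

/-!
On the coin-tossing space the functions `Mₙ(ε) = 2ⁿ • r_{ε₁…εₙ}` form a martingale, and `ηₙ` is the
mean of `Mₙ₊₁ - Mₙ` times the `(n + 1)`-st Rademacher sign. By Cauchy–Schwarz `‖ηₙ‖²` is at most
the squared `L²` norm of `Mₙ₊₁ - Mₙ`, which by orthogonality of martingale differences (here, the
parallelogram law at each node) is the increase of the squared `L²` norm of `Mₙ`. These increments
telescope and their sum is controlled by the bound on the `Mₙ`.
-/

section Prelim

theorem sum_fin_succ_pi_eq_sum_snoc {M : Type*} [AddCommMonoid M] {n : ℕ}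
    {α : Fin (n + 1) → Type*} [∀ i, Fintype (α i)] (f : (∀ i, α i) → M) :
    ∑ e, f e = ∑ e : ∀ i : Fin n, α i.castSucc, ∑ a : α (Fin.last n), f (Fin.snoc e a) := by
  rw [← (Fin.snocEquiv α).sum_comp f, Fintype.sum_prod_type_right]
  rfl

variable {ι E : Type*} [SeminormedAddCommGroup E]

theorem norm_sum_sq_le_card_mul_sum_norm_sq (s : Finset ι) (f : ι → E) :
    ‖∑ i ∈ s, f i‖ ^ 2 ≤ s.card * ∑ i ∈ s, ‖f i‖ ^ 2 :=
  calc ‖∑ i ∈ s, f i‖ ^ 2 ≤ (∑ i ∈ s, ‖f i‖) ^ 2 := by gcongr; exact norm_sum_le s f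
    _ ≤ s.card * ∑ i ∈ s, ‖f i‖ ^ 2 := sq_sum_le_card_mul_sum_sq

theorem tendsto_cofinite_zero_of_summable_norm_sq {f : ι → E}
    (hf : Summable fun i => ‖f i‖ ^ 2) : Tendsto f cofinite (nhds 0) := by
  rw [tendsto_zero_iff_norm_tendsto_zero]
  simpa only [Real.sqrt_sq (norm_nonneg _), Real.sqrt_zero] using hf.tendsto_cofinite_zero.sqrt

end Prelim

section Dyadic

variable {E : Type*} [SeminormedAddCommGroup E] (r : (n : ℕ) → (Fin n → Bool) → E)

/-- The coefficient `ηₙ`: the mean, over the equally likely binary strings of length `n + 1`, of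
`2ⁿ⁺¹ • r (n + 1)` times the Rademacher sign of the last bit (`1` for `false`, `-1` for `true`). -/
def rademacherCoeff (n : ℕ) : E :=
  ∑ e : Fin n → Bool, (r (n + 1) (Fin.snoc e false) - r (n + 1) (Fin.snoc e true))

/-- The squared `L²` norm of the step function `e ↦ 2ⁿ • r n e` on the `2ⁿ` equally likely binary
strings of length `n`. The factor `2ⁿ` is `2⁻ⁿ`, the weight of a string, times `(2ⁿ)²`. -/
def dyadicEnergy (n : ℕ) : ℝ :=
  2 ^ n * ∑ e, ‖r n e‖ ^ 2

theorem dyadicEnergy_nonneg (n : ℕ) : 0 ≤ dyadicEnergy r n := by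
  unfold dyadicEnergy
  positivity

variable {r}

theorem dyadicEnergy_le_sq {n : ℕ} {C : ℝ} (hr : ∀ e, ‖r n e‖ ≤ C / 2 ^ n) :
    dyadicEnergy r n ≤ C ^ 2 :=
  calc dyadicEnergy r n ≤ 2 ^ n * ∑ _e : Fin n → Bool, (C / 2 ^ n) ^ 2 := by
        unfold dyadicEnergy
        gcongr with e
        exact hr e
    _ = C ^ 2 := by
        simp only [Finset.sum_const, Finset.card_univ, Fintype.card_fun, Fintype.card_fin,
          Fintype.card_bool, nsmul_eq_mul, Nat.cast_pow, Nat.cast_ofNat]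
        field_simp

theorem norm_rademacherCoeff_sq_le (n : ℕ) :
    ‖rademacherCoeff r n‖ ^ 2 ≤
      2 ^ n * ∑ e : Fin n → Bool,
        ‖r (n + 1) (Fin.snoc e false) - r (n + 1) (Fin.snoc e true)‖ ^ 2 := by
  simpa [rademacherCoeff] using norm_sum_sq_le_card_mul_sum_norm_sq Finset.univ
    fun e : Fin n → Bool => r (n + 1) (Fin.snoc e false) - r (n + 1) (Fin.snoc e true)

variable (𝕜 : Type*) [RCLike 𝕜] [InnerProductSpace 𝕜 E]

include 𝕜

theorem dyadicEnergy_succ_sub {n : ℕ}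
    (hsplit : ∀ e, r n e = r (n + 1) (Fin.snoc e false) + r (n + 1) (Fin.snoc e true)) :
    dyadicEnergy r (n + 1) - dyadicEnergy r n =
      2 ^ n * ∑ e : Fin n → Bool,
        ‖r (n + 1) (Fin.snoc e false) - r (n + 1) (Fin.snoc e true)‖ ^ 2 := by
  have hnode (e : Fin n → Bool) :
      2 * ∑ b, ‖r (n + 1) (Fin.snoc e b)‖ ^ 2 - ‖r n e‖ ^ 2 =
        ‖r (n + 1) (Fin.snoc e false) - r (n + 1) (Fin.snoc e true)‖ ^ 2 := by
    rw [hsplit e, Fintype.sum_bool]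
    linarith [parallelogram_law_with_norm 𝕜 (r (n + 1) (Fin.snoc e false))
      (r (n + 1) (Fin.snoc e true))]
  simp only [← hnode, dyadicEnergy, sum_fin_succ_pi_eq_sum_snoc, Finset.sum_sub_distrib,
    ← Finset.mul_sum]
  ring

theorem sum_norm_rademacherCoeff_sq_le
    (hsplit : ∀ n e, r n e = r (n + 1) (Fin.snoc e false) + r (n + 1) (Fin.snoc e true)) (n : ℕ) :
    ∑ k ∈ Finset.range n, ‖rademacherCoeff r k‖ ^ 2 ≤ dyadicEnergy r n - dyadicEnergy r 0 :=
  calc ∑ k ∈ Finset.range n, ‖rademacherCoeff r k‖ ^ 2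
      ≤ ∑ k ∈ Finset.range n, (dyadicEnergy r (k + 1) - dyadicEnergy r k) :=
        Finset.sum_le_sum fun k _ =>
          (norm_rademacherCoeff_sq_le k).trans_eq (dyadicEnergy_succ_sub 𝕜 (hsplit k)).symm
    _ = dyadicEnergy r n - dyadicEnergy r 0 := Finset.sum_range_sub _ n

theorem martingale_difference_lemma_general {C : ℝ} (hC : ∀ n, dyadicEnergy r n ≤ C)
    (hsplit : ∀ n e, r n e = r (n + 1) (Fin.snoc e false) + r (n + 1) (Fin.snoc e true)) :
    Summable (fun n => ‖rademacherCoeff r n‖ ^ 2) ∧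
      ∑' n, ‖rademacherCoeff r n‖ ^ 2 ≤ C ∧
      Tendsto (rademacherCoeff r) atTop (nhds 0) := by
  have hpartial (n : ℕ) : ∑ k ∈ Finset.range n, ‖rademacherCoeff r k‖ ^ 2 ≤ C := by
    linarith [sum_norm_rademacherCoeff_sq_le 𝕜 hsplit n, hC n, dyadicEnergy_nonneg r 0]
  have hnonneg (n : ℕ) : 0 ≤ ‖rademacherCoeff r n‖ ^ 2 := sq_nonneg _
  have hsummable := summable_of_sum_range_le hnonneg hpartial
  exact ⟨hsummable, Real.tsum_le_of_sum_range_le hnonneg hpartial,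
    Nat.cofinite_eq_atTop ▸ tendsto_cofinite_zero_of_summable_norm_sq hsummable⟩

end Dyadic

/-- **A martingale difference lemma.** Given numbers `r_{ε₁…ε_ℓ}` indexed by
finite binary strings with `|r_{ε₁…ε_ℓ}| ≤ 2^{-ℓ}` and
`r_{ε₁…ε_ℓ} = r_{ε₁…ε_ℓ0} + r_{ε₁…ε_ℓ1}`, the numbers
`η_ℓ := ∑_{ε₁…ε_ℓ} (r_{ε₁…ε_ℓ0} - r_{ε₁…ε_ℓ1})` satisfy `∑ |η_ℓ|² ≤ 1`;
in particular `η_ℓ → 0`. -/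
theorem martingale_difference_lemma {𝕜 : Type*} [RCLike 𝕜]
    (r : (ℓ : ℕ) → (Fin ℓ → Bool) → 𝕜)
    (hbound : ∀ (ℓ : ℕ) (e : Fin ℓ → Bool), ‖r ℓ e‖ ≤ (1 / 2 : ℝ) ^ ℓ)
    (hsplit : ∀ (ℓ : ℕ) (e : Fin ℓ → Bool),
      r ℓ e = r (ℓ + 1) (Fin.snoc e false) + r (ℓ + 1) (Fin.snoc e true)) :
    Summable (fun ℓ : ℕ =>
        ‖∑ e : Fin ℓ → Bool,
            (r (ℓ + 1) (Fin.snoc e false) - r (ℓ + 1) (Fin.snoc e true))‖ ^ 2) ∧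
    (∑' ℓ : ℕ,
        ‖∑ e : Fin ℓ → Bool,
            (r (ℓ + 1) (Fin.snoc e false) - r (ℓ + 1) (Fin.snoc e true))‖ ^ 2) ≤ 1 ∧
    Tendsto (fun ℓ : ℕ =>
        ∑ e : Fin ℓ → Bool,
          (r (ℓ + 1) (Fin.snoc e false) - r (ℓ + 1) (Fin.snoc e true)))
      atTop (nhds 0) := by
  exact martingale_difference_lemma_general 𝕜
    (fun n => by simpa using dyadicEnergy_le_sq (C := 1) (by simpa [one_div] using hbound n)) hsplit
end

section
/- Let $L$ be a Banach limit on $\ell^\infty$. For $\ell \in \mathbb{N}$ and $\varepsilon_1,\ldots,\varepsilon_\ell \in \{0,1\}$ let $\mu_{\varepsilon_1\ldots\varepsilon_\ell} \in \ell^\infty$ be the $0$-$1$ sequence which equals $1$ exactly at the positions $k \cdot 2^\ell + 1 + \varepsilon_1 2^0 + \cdots + \varepsilon_\ell 2^{\ell-1}$ for $k = 0,1,2,\ldots$, and $0$ otherwise. Then for every $x \in \ell^\infty$ with $\|x\|_\infty \leq 1$, denoting by $\mu_{\varepsilon_1\ldots\varepsilon_\ell}\, x$ the pointwise product, one has $|L(\mu_{\varepsilon_1\ldots\varepsilon_\ell}\,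 x)| \leq 2^{-\ell}$. -/
open scoped ENNReal

/-! Shift invariance gives `N • L y = L (y + T y + ⋯ + T^[N - 1] y)`, where `T` is the left shift.
The `n`-th term of the sequence on the right is the sum of `y` over the window `{n, …, n + N - 1}`.
If `y` is `x` restricted to a residue class modulo `N = 2 ^ ℓ`, such a window contains at most one
index of the class, so the sequence has norm at most `‖x‖ ≤ 1`. -/

section Shift

variable {E : Type*} [NormedAddCommGroup E]

theorem memℓp_infty_comp {α β : Type*} {x : α → E} (hx : Memℓp x ∞) (f : β → α) :
    Memℓp (x ∘ f) ∞ :=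
  memℓp_infty <| hx.bddAbove.mono <| Set.range_comp_subset_range f fun a => ‖x a‖

/-- The left shift `(x₀, x₁, x₂, …) ↦ (x₁, x₂, x₃, …)` on bounded sequences, as a plain map so that
its orbits can be summed with `birkhoffSum`. -/
def leftShift (x : lp (fun _ : ℕ => E) ∞) : lp (fun _ : ℕ => E) ∞ :=
  ⟨x ∘ Nat.succ, memℓp_infty_comp (lp.memℓp x) Nat.succ⟩

theorem leftShift_apply (x : lp (fun _ : ℕ => E) ∞) (n : ℕ) : leftShift x n = x (n + 1) :=
  rfl

theorem leftShift_iterate_apply (x : lp (fun _ : ℕ => E) ∞) (i n : ℕ) :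
    leftShift^[i] x n = x (n + i) := by
  induction i generalizing n with
  | zero => rfl
  | succ i ih => rw [Function.iterate_succ_apply', leftShift_apply, ih, add_right_comm, add_assoc]

theorem birkhoffSum_leftShift_apply (x : lp (fun _ : ℕ => E) ∞) (N n : ℕ) :
    birkhoffSum leftShift id N x n = ∑ i ∈ Finset.range N, x (n + i) := by
  simp only [birkhoffSum, id_eq, lp.coeFn_sum, Finset.sum_apply, leftShift_iterate_apply]

theorem norm_birkhoffSum_leftShift_le {x y : lp (fun _ : ℕ => E) ∞} {p : ℕ → Prop}
    [DecidablePred p] {N k : ℕ} (hp : ∀ n, {i ∈ Finset.range N | p (n + i)}.card ≤ k)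
    (hy : ∀ m, y m = if p m then x m else 0) :
    ‖birkhoffSum leftShift id N y‖ ≤ k * ‖x‖ := by
  refine lp.norm_le_of_forall_le' _ fun n => ?_
  calc ‖birkhoffSum leftShift id N y n‖
      = ‖∑ i ∈ Finset.range N with p (n + i), x (n + i)‖ := by
        simp only [birkhoffSum_leftShift_apply, hy, Finset.sum_filter]
    _ ≤ {i ∈ Finset.range N | p (n + i)}.card • ‖x‖ :=
        (norm_sum_le _ _).trans <| Finset.sum_le_card_nsmul _ _ _ fun i _ =>
          lp.norm_apply_le_norm ENNReal.top_ne_zero x (n + i)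
    _ ≤ k * ‖x‖ := by
        rw [nsmul_eq_mul]
        gcongr
        exact hp n

end Shift

theorem card_filter_range_add_mod_eq_le_one (N r n : ℕ) :
    {i ∈ Finset.range N | (n + i) % N = r}.card ≤ 1 := by
  simp only [Finset.card_le_one, Finset.mem_filter, Finset.mem_range]
  rintro a ⟨haN, har⟩ b ⟨hbN, hbr⟩
  have hab : n + a ≡ n + b [MOD N] := har.trans hbr.symm
  exact (Nat.ModEq.add_left_cancel' n hab).eq_of_lt_of_lt haN hbN

theorem banachLimit_mu_bound_general {𝕜 E F : Type*} [RCLike 𝕜]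
    [NormedAddCommGroup E] [NormedSpace 𝕜 E] [NormedAddCommGroup F] [NormedSpace 𝕜 F]
    (L : lp (fun _ : ℕ => E) ∞ →L[𝕜] F) (hL : L ∘ leftShift = L)
    {p : ℕ → Prop} [DecidablePred p] {N k : ℕ} (hN : N ≠ 0)
    (hp : ∀ n, {i ∈ Finset.range N | p (n + i)}.card ≤ k)
    {x y : lp (fun _ : ℕ => E) ∞} (hy : ∀ m, y m = if p m then x m else 0) :
    ‖L y‖ ≤ ‖L‖ * (k * ‖x‖) / N := by
  have map_sum_eq : L (birkhoffSum leftShift id N y) = N • L y := by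
    rw [map_birkhoffSum, Function.comp_id, birkhoffSum_of_comp_eq hL, Pi.smul_apply]
  rw [le_div_iff₀' (Nat.cast_pos.2 hN.pos)]
  calc (N : ℝ) * ‖L y‖ = ‖L (birkhoffSum leftShift id N y)‖ := by
        rw [map_sum_eq, RCLike.norm_nsmul 𝕜, nsmul_eq_mul]
    _ ≤ ‖L‖ * (k * ‖x‖) := L.le_opNorm_of_le (norm_birkhoffSum_leftShift_le hp hy)

/-- For a Banach limit `L` on `ℓ^∞` (a norm-one shift-invariant functional with
`L(1,1,…) = 1`), for the 0-1 sequence `μ_{ε₁…ε_ℓ}` which is `1` exactly at the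
positions `k·2^ℓ + 1 + ε₁2⁰ + ⋯ + ε_ℓ2^{ℓ-1}` (positions counted from 1, i.e.
at the 0-based indices `m` with `m % 2^ℓ = ε₁2⁰ + ⋯ + ε_ℓ2^{ℓ-1}`), and for
every `x ∈ ℓ^∞` with `‖x‖ ≤ 1`, the pointwise product satisfies
`|L(μ_{ε₁…ε_ℓ} x)| ≤ 2^{-ℓ}`. -/
theorem banachLimit_mu_bound
    (L : lp (fun _ : ℕ => ℝ) ∞ →L[ℝ] ℝ)
    (hL1 : L 1 = 1) (hLnorm : ‖L‖ = 1)
    (hshift : ∀ u v : lp (fun _ : ℕ => ℝ) ∞, (∀ n, v n = u (n + 1)) → L v = L u)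
    (ℓ : ℕ) (e : Fin ℓ → Bool)
    (x : lp (fun _ : ℕ => ℝ) ∞) (hx : ‖x‖ ≤ 1)
    (y : lp (fun _ : ℕ => ℝ) ∞)
    (hy : ∀ m : ℕ,
      y m = (if m % 2 ^ ℓ = ∑ j : Fin ℓ, (if e j then 2 ^ (j : ℕ) else 0)
        then (1 : ℝ) else 0) * x m) :
    |L y| ≤ (1 / 2 : ℝ) ^ ℓ := by
  have hLy := banachLimit_mu_bound_general L (funext fun u => hshift u (leftShift u) fun _ => rfl)
    (NeZero.ne (2 ^ ℓ)) (card_filter_range_add_mod_eq_le_one (2 ^ ℓ) _) (by simpa using hy)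
  exact hLy.trans (by simpa [hLnorm, div_eq_mul_inv] using hx)
end
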